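/- arXiv:1309.1366 — 2 statements merged into one kernel-verified Lean document; each statement's English description precedes it below -/
import Mathlib

section
/- Let μ be a (K,d)-doubling Borel measure on a metric space (M,ρ) endowed with a Christ dyadic cube system with parameter δ ∈ (0,1) and with the level-j₀ subcube families. Let ε ∈ (0,1], s ∈ ℝ, p ∈ (0,∞), q ∈ (0,∞], τ ∈ [0,∞). For every j ∈ ℤ₊, t ∈ I_j and 1 ≤ ν ≤ N_t^j, let S_t^{j,ν} ⊆ Q_t^{j,ν} be a measurable set with μ(S_t^{j,ν}) ≥ ε·μ(Q_t^{j,ν}). Then there exists a constant C ≥ 1, depending on ε, s, p, q, τ (and the cube system and doubling constants) but not on a or the sets S, such that for every family a = {a_t^{j,ν}} of complex numbers: C^{−1}·‖a‖_{f^{s,τ}_{p,q}} ≤ sup_{k∈ℤ, α∈I_k} μ(Q_α^k)^{−τ}( ∫_{Q_α^k} ( ∑_{j=max(k,0)}^∞ ( ∑_{t∈I_j}∑_{ν=1}^{N_t^j} δ^{−js}|a_t^{j,ν}|χ_{S_t^{j,ν}}(x) )^q )^{p/q} dμ(x) )^{1/p} ≤ ‖a‖_{f^{s,τ}_{p,q}},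 and the analogous two-sided estimate holds for the tilde norm f̃^{s,τ}_{p,q} with δ^{−js} replaced by μ(Q_t^{j,ν})^{−s/d}. -/
open MeasureTheory Metric
open scoped ENNReal

/-- A Christ dyadic cube system on a metric measure space `(M, ρ, μ)`. -/
structure ChristSystem (M : Type*) [MetricSpace M] [MeasurableSpace M] (μ : Measure M) where
  δ : ℝ
  δ_pos : 0 < δ
  δ_lt_one : δ < 1
  cSmall : ℝ
  cBig : ℝ
  cSmall_pos : 0 < cSmall
  cSmall_lt_cBig : cSmall < cBig
  I : ℤ → Type
  countable_I : ∀ j : ℤ, Countable (I j)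
  Q : (j : ℤ) → I j → Set M
  center : (j : ℤ) → I j → M
  isOpen_Q : ∀ (j : ℤ) (α : I j), IsOpen (Q j α)
  cover : ∀ j : ℤ, μ (Set.univ \ ⋃ α : I j, Q j α) = 0
  disjoint_Q : ∀ (j : ℤ) (α β : I j), α ≠ β → Q j α ∩ Q j β = ∅
  nested : ∀ (j ℓ : ℤ), j ≤ ℓ → ∀ (α : I j) (β : I ℓ), Q ℓ β ⊆ Q j α ∨ Q ℓ β ∩ Q j α = ∅
  parent : ∀ (j : ℤ) (α : I j) (ℓ : ℤ), ℓ < j → ∃! β : I ℓ, Q j α ⊆ Q ℓ β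
  diam_le : ∀ (j : ℤ) (α : I j), EMetric.diam (Q j α) ≤ ENNReal.ofReal (cBig * δ ^ j)
  ball_subset : ∀ (j : ℤ) (α : I j), ball (center j α) (cSmall * δ ^ j) ⊆ Q j α

/-- The `ℓ^q` norm (with `q ∈ (0,∞]`, usual modification when `q = ∞`) of a
sequence of extended nonnegative reals. -/
noncomputable def seqLq (q : ℝ≥0∞) (a : ℕ → ℝ≥0∞) : ℝ≥0∞ :=
  if q = ⊤ then ⨆ j, a j else (∑' j, a j ^ q.toReal) ^ (1 / q.toReal)

/-- The `L^p` quantity `(∫_A g^p dμ)^{1/p}` (ess sup over `A` when `p = ∞`) for a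
nonnegative function `g`. -/
noncomputable def lpOn {M : Type*} [MetricSpace M] [MeasurableSpace M]
    (μ : Measure M) (p : ℝ≥0∞) (A : Set M) (g : M → ℝ≥0∞) : ℝ≥0∞ :=
  if p = ⊤ then essSup g (μ.restrict A)
  else (∫⁻ x in A, g x ^ p.toReal ∂μ) ^ (1 / p.toReal)

/-- The `ℓ^q(L^p_τ)` norm of a sequence of nonnegative functions:
`sup_{k ∈ ℤ, α ∈ I_k} μ(Q_α^k)^{-τ} ( ∑_{j = max(k,0)}^∞ ( ∫_{Q_α^k} g_j^p dμ )^{q/p} )^{1/q}`. -/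
noncomputable def bNorm {M : Type*} [MetricSpace M] [MeasurableSpace M] {μ : Measure M}
    (S : ChristSystem M μ) (p q : ℝ≥0∞) (τ : ℝ) (g : ℕ → M → ℝ≥0∞) : ℝ≥0∞ :=
  ⨆ (k : ℤ) (α : S.I k), μ (S.Q k α) ^ (-τ) *
    seqLq q (fun j => if k.toNat ≤ j then lpOn μ p (S.Q k α) (g j) else 0)

/-- The `L^p_τ(ℓ^q)` norm of a sequence of nonnegative functions:
`sup_{k ∈ ℤ, α ∈ I_k} μ(Q_α^k)^{-τ} ( ∫_{Q_α^k} ( ∑_{j = max(k,0)}^∞ g_j^q )^{p/q} dμ )^{1/p}`. -/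
noncomputable def fNorm {M : Type*} [MetricSpace M] [MeasurableSpace M] {μ : Measure M}
    (S : ChristSystem M μ) (p q : ℝ≥0∞) (τ : ℝ) (g : ℕ → M → ℝ≥0∞) : ℝ≥0∞ :=
  ⨆ (k : ℤ) (α : S.I k), μ (S.Q k α) ^ (-τ) *
    lpOn μ p (S.Q k α) (fun x => seqLq q (fun j => if k.toNat ≤ j then g j x else 0))

/-- The index type of the level-`(j+j₀)` subcubes of the cube `Q_t^j`. -/
def SubIdx {M : Type*} [MetricSpace M] [MeasurableSpace M] {μ : Measure M}
    (S : ChristSystem M μ) (j₀ : ℕ) (j : ℕ) (t : S.I j) : Type :=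
  {β : S.I ((j : ℤ) + j₀) // S.Q ((j : ℤ) + j₀) β ⊆ S.Q (j : ℤ) t}

/-- The subcube `Q_t^{j,ν}`. -/
def SubQ {M : Type*} [MetricSpace M] [MeasurableSpace M] {μ : Measure M}
    (S : ChristSystem M μ) (j₀ : ℕ) (j : ℕ) (t : S.I j) (ν : SubIdx S j₀ j t) : Set M :=
  S.Q ((j : ℤ) + j₀) ν.1

/-- The level-`j` function `x ↦ ∑_{t ∈ I_j} ∑_{ν} w_t^{j,ν} |a_t^{j,ν}| χ_{E_t^{j,ν}}(x)`
associated with a coefficient family `a`, a weight family `w` and a family of sets `E`. -/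
noncomputable def seqFunOn {M : Type*} [MetricSpace M] [MeasurableSpace M] {μ : Measure M}
    (S : ChristSystem M μ) (j₀ : ℕ)
    (w : (j : ℕ) → (t : S.I j) → SubIdx S j₀ j t → ℝ≥0∞)
    (E : (j : ℕ) → (t : S.I j) → SubIdx S j₀ j t → Set M)
    (a : (j : ℕ) → (t : S.I j) → SubIdx S j₀ j t → ℂ) (j : ℕ) (x : M) : ℝ≥0∞ :=
  ∑' (t : S.I j) (ν : SubIdx S j₀ j t),
    w j t ν * (‖a j t ν‖₊ : ℝ≥0∞) * (E j t ν).indicator (fun _ => (1 : ℝ≥0∞)) x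

/-- The level-`j` function `x ↦ ∑_{t ∈ I_j} ∑_{ν} w_t^{j,ν} |a_t^{j,ν}| χ_{Q_t^{j,ν}}(x)`. -/
noncomputable def seqFun {M : Type*} [MetricSpace M] [MeasurableSpace M] {μ : Measure M}
    (S : ChristSystem M μ) (j₀ : ℕ)
    (w : (j : ℕ) → (t : S.I j) → SubIdx S j₀ j t → ℝ≥0∞)
    (a : (j : ℕ) → (t : S.I j) → SubIdx S j₀ j t → ℂ) (j : ℕ) (x : M) : ℝ≥0∞ :=
  seqFunOn S j₀ w (fun j t ν => SubQ S j₀ j t ν) a j x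

/-- The weight `δ^{-js}` used for the sequence spaces `b^{s,τ}_{p,q}` and `f^{s,τ}_{p,q}`. -/
noncomputable def deltaWeight {M : Type*} [MetricSpace M] [MeasurableSpace M] {μ : Measure M}
    (S : ChristSystem M μ) (j₀ : ℕ) (s : ℝ) :
    (j : ℕ) → (t : S.I j) → SubIdx S j₀ j t → ℝ≥0∞ :=
  fun j _ _ => ENNReal.ofReal (S.δ ^ (-(j : ℝ) * s))

/-- The weight `μ(Q_t^{j,ν})^{-s/d}` used for the sequence spaces `b̃^{s,τ}_{p,q}`
and `f̃^{s,τ}_{p,q}`. -/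
noncomputable def tildeWeight {M : Type*} [MetricSpace M] [MeasurableSpace M] {μ : Measure M}
    (S : ChristSystem M μ) (j₀ : ℕ) (d s : ℝ) :
    (j : ℕ) → (t : S.I j) → SubIdx S j₀ j t → ℝ≥0∞ :=
  fun j t ν => μ (SubQ S j₀ j t ν) ^ (-(s / d))

/-!
A cube of level `k` is an event at every time `n ≥ k` of the filtration of the cubes of level
`n + j₀`, the `n`-th function `u n` of the sequence is known at time `n`, and the union `F n` of the
sets `E n t ν` fills at least the proportion `ε` of every event at time `n`. Hence the integral of a
function known at time `n` is at most `ε⁻¹` times its integral over `F n`, and it has to be shown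
that `∫ (∑ u n) ^ r` is controlled by `∫ (∑ u n · 1_{F n}) ^ r`, where `r = p / q`.

Let `U` and `V` be the partial sums of the two series. The increment of `U ^ r` at time `n` is known
at time `n`, so it may be integrated over `F n` only. For `r ≤ 1` it is bounded there by the
increment of `V ^ r`, by concavity and `V ≤ U`; for `r > 1` it is bounded by the increment of
`r V U ^ (r - 1)`, by Bernoulli's inequality. Summing the increments proves the claim for `r ≤ 1`
and gives `∫ U ^ r ≤ r ε⁻¹ ∫ V U ^ (r - 1)` for `r > 1`, where Hölder's inequality allows `∫ U ^ r`
to be absorbed. For `q = ∞` the same argument applies to running suprema.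
-/

section Inequalities

lemma convexOn_add_le_add {s : Set ℝ} {f : ℝ → ℝ} (hf : ConvexOn ℝ s f) {x y u : ℝ}
    (hx : x ∈ s) (hyu : y + u ∈ s) (hxy : x ≤ y) (hu : 0 ≤ u) :
    f y + f (x + u) ≤ f x + f (y + u) := by
  rcases hu.eq_or_lt with rfl | hu
  · simp [add_comm]
  rcases hxy.eq_or_lt with rfl | hxy
  · rfl
  have chord_y := hf.secant_mono_aux1 hx hyu hxy (by linarith : y < y + u)
  have chord_xu := hf.secant_mono_aux1 hx hyu (by linarith : x < x + u) (by linarith)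
  refine le_of_mul_le_mul_left ?_ (by linarith : 0 < y + u - x)
  linarith

lemma rpow_add_add_rpow_le_rpow_add_rpow_add {r : ℝ} (hr0 : 0 ≤ r) (hr1 : r ≤ 1)
    {x y : ℝ≥0∞} (hxy : x ≤ y) (u : ℝ≥0∞) :
    (y + u) ^ r + x ^ r ≤ y ^ r + (x + u) ^ r := by
  rcases hr0.eq_or_lt with rfl | hr0
  · simp
  by_cases hy : y = ⊤
  · simp [hy, hr0]
  by_cases hu : u = ⊤
  · simp [hu, hr0]
  lift y to NNReal using hy
  lift u to NNReal using hu
  lift x to NNReal using ne_top_of_le_ne_top ENNReal.coe_ne_top hxy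
  have := convexOn_add_le_add (Real.concaveOn_rpow hr0.le hr1).neg x.coe_nonneg
    (add_nonneg y.coe_nonneg u.coe_nonneg) (by exact_mod_cast hxy) u.coe_nonneg
  simp only [← ENNReal.coe_add, ← ENNReal.coe_rpow_of_nonneg _ hr0.le]
  norm_cast
  rw [← NNReal.coe_le_coe]
  push_cast
  simp only [Pi.neg_apply] at this
  linarith

lemma add_rpow_le_rpow_add_mul {r : ℝ} (hr : 1 < r) (x u : ℝ≥0∞) :
    (x + u) ^ r ≤ x ^ r + ENNReal.ofReal r * (u * (x + u) ^ (r - 1)) := by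
  have hr0 : 0 < r := by linarith
  by_cases hx : x = ⊤
  · simp [hx, hr0]
  by_cases hu : u = ⊤
  · simp [hu, hr0, hr, ENNReal.mul_top]
  rcases eq_or_ne (x + u) 0 with hxu | hxu
  · simp [hxu, hr0]
  lift x to NNReal using hx
  lift u to NNReal using hu
  have hxu : (0 : ℝ) < x + u := by exact_mod_cast pos_iff_ne_zero.2 hxu
  have tangent : ((x : ℝ) + u) ^ r ≤ x ^ r + r * (u * (x + u) ^ (r - 1)) := by
    have bernoulli := one_add_mul_self_le_rpow_one_add (s := - u / (x + u)) (p := r)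
      (by rw [le_div_iff₀ hxu]; linarith [x.coe_nonneg]) hr.le
    have : 1 + -(u : ℝ) / (x + u) = x / (x + u) := by field_simp; ring
    rw [this, Real.div_rpow x.coe_nonneg hxu.le, le_div_iff₀ (by positivity)] at bernoulli
    rw [Real.rpow_sub_one hxu.ne']
    linear_combination bernoulli
  rw [← ENNReal.coe_add, ← ENNReal.coe_rpow_of_nonneg _ hr0.le,
    ← ENNReal.coe_rpow_of_nonneg _ hr0.le, ← ENNReal.coe_rpow_of_nonneg _ (sub_nonneg.2 hr.le),
    ENNReal.ofReal]
  norm_cast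
  rw [← NNReal.coe_le_coe]
  push_cast
  rwa [Real.coe_toNNReal _ hr0.le]

lemma le_rpow_mul_of_le_mul {r r' : ℝ} (hr : r.HolderConjugate r') {κ y z : ℝ≥0∞}
    (hyz : y ≠ ⊤ → z ≠ ⊤) (h : z ≤ κ * (y ^ (1 / r) * z ^ (1 / r'))) : z ≤ κ ^ r * y := by
  rcases eq_or_ne z 0 with rfl | hz
  · exact zero_le
  rcases eq_or_ne y ⊤ with rfl | hy
  · have hκ : κ ≠ 0 := by
      rintro rfl
      simp [hz] at h
    rw [ENNReal.mul_top (by simp [hκ, hr.pos.le])]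
    exact le_top
  have hz_split : z = z ^ (1 / r) * z ^ (1 / r') := by
    simp [← ENNReal.rpow_add _ _ hz (hyz hy), hr.inv_add_inv_eq_one]
  have root_le : z ^ (1 / r) ≤ κ * y ^ (1 / r) := by
    nth_rw 1 [hz_split, ← mul_assoc] at h
    refine (ENNReal.mul_le_mul_iff_left ?_ ?_).1 h
    · simp [hz, hyz hy]
    · simp [hz, hyz hy]
  calc z = (z ^ (1 / r)) ^ r := by rw [one_div, ENNReal.rpow_inv_rpow hr.ne_zero]
    _ ≤ (κ * y ^ (1 / r)) ^ r := ENNReal.rpow_le_rpow root_le hr.nonneg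
    _ = κ ^ r * y := by
      rw [ENNReal.mul_rpow_of_nonneg _ _ hr.nonneg, one_div, ENNReal.rpow_inv_rpow hr.ne_zero]

end Inequalities

/-- A sequence of measurable sets `F n` of conditional `ν`-density at least `c⁻¹` with respect to a
filtration: each `F n` fills a fixed proportion of every event known at time `n`. The density is
encoded by its reciprocal `c`, so that no division by `c` is needed in the estimates. -/
structure IsThick {X : Type*} {m : MeasurableSpace X} (ν : Measure X) (ℱ : Filtration ℕ m)
    (F : ℕ → Set X) (c : ℝ≥0∞) : Prop where
  measurableSet : ∀ n, MeasurableSet (F n)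
  measure_le : ∀ n A, MeasurableSet[ℱ n] A → ν A ≤ c * ν (A ∩ F n)

/-- The constant of the comparison in `L^p(ℓ^q)`, as a function of the reciprocal density `c` and of
the ratio `r = p / q`. The case `q = ∞` is included as `r = 0`. -/
noncomputable def thickConst (c : ℝ≥0∞) (r : ℝ) : ℝ≥0∞ :=
  (ENNReal.ofReal (max 1 r) * c) ^ max 1 r

lemma thickConst_of_le_one (c : ℝ≥0∞) {r : ℝ} (hr : r ≤ 1) : thickConst c r = c := by
  simp [thickConst, hr]

lemma thickConst_of_one_le (c : ℝ≥0∞) {r : ℝ} (hr : 1 ≤ r) :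
    thickConst c r = (ENNReal.ofReal r * c) ^ r := by
  simp [thickConst, hr]

lemma thickConst_ne_top {c : ℝ≥0∞} (hc : c ≠ ⊤) (r : ℝ) : thickConst c r ≠ ⊤ :=
  ENNReal.rpow_ne_top_of_nonneg (zero_le_one.trans (le_max_left 1 r))
    (ENNReal.mul_ne_top ENNReal.ofReal_ne_top hc)

section PartialSums

variable {X : Type*} {m : MeasurableSpace X} {ν : Measure X}

lemma lintegral_iSup_le_mul_lintegral_iSup {A B : ℕ → X → ℝ≥0∞} {C : ℝ≥0∞}
    (hA : ∀ n, Measurable (A n)) (hA_mono : Monotone A)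
    (h : ∀ n, ∫⁻ x, A n x ∂ν ≤ C * ∫⁻ x, B n x ∂ν) :
    ∫⁻ x, ⨆ n, A n x ∂ν ≤ C * ∫⁻ x, ⨆ n, B n x ∂ν := by
  rw [lintegral_iSup hA hA_mono]
  refine iSup_le fun n => (h n).trans ?_
  gcongr with x
  exact le_iSup (fun n => B n x) n

lemma lintegral_sum_rpow_lt_top {ι : Type*} {s : Finset ι} {u : ι → X → ℝ≥0∞} {r : ℝ} (hr : 1 ≤ r)
    (hu : ∀ i ∈ s, Measurable (u i)) (hu_top : ∀ i ∈ s, ∫⁻ x, u i x ^ r ∂ν < ⊤) :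
    ∫⁻ x, (∑ i ∈ s, u i x) ^ r ∂ν < ⊤ := by
  classical
  induction s using Finset.induction_on with
  | empty => simp [show 0 < r by linarith]
  | insert i s hi ih =>
    simp only [Finset.sum_insert hi]
    exact ENNReal.lintegral_rpow_add_lt_top_of_lintegral_rpow_lt_top
      (hu i (Finset.mem_insert_self i s)).aemeasurable (hu_top i (Finset.mem_insert_self i s))
      (ih (fun j hj => hu j (Finset.mem_insert_of_mem hj))
        fun j hj => hu_top j (Finset.mem_insert_of_mem hj)) hr

lemma monotone_sum_range_rpow (u : ℕ → X → ℝ≥0∞) {r : ℝ} (hr : 0 ≤ r) :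
    Monotone fun n x => (∑ j ∈ Finset.range n, u j x) ^ r :=
  fun n n' h x => by dsimp only; gcongr

lemma measurable_sum_range_succ {ℱ : Filtration ℕ m} {u : ℕ → X → ℝ≥0∞} (hu : Adapted ℱ u) (n : ℕ) :
    Measurable[ℱ n] fun x => ∑ j ∈ Finset.range (n + 1), u j x :=
  Finset.measurable_fun_sum _ fun j hj =>
    (hu j).mono (ℱ.mono (Finset.mem_range_succ_iff.1 hj)) le_rfl

end PartialSums

namespace IsThick

variable {X : Type*} {m : MeasurableSpace X} {ν : Measure X} {ℱ : Filtration ℕ m}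
  {F : ℕ → Set X} {c : ℝ≥0∞}

lemma lintegral_le (h : IsThick ν ℱ F c) {n : ℕ} {φ : X → ℝ≥0∞} (hφ : Measurable[ℱ n] φ) :
    ∫⁻ x, φ x ∂ν ≤ c * ∫⁻ x in F n, φ x ∂ν := by
  have trim_le : ν.trim (ℱ.le n) ≤ c • (ν.restrict (F n)).trim (ℱ.le n) := by
    refine Measure.le_iff.2 fun A hA => ?_
    rw [Measure.smul_apply, trim_measurableSet_eq _ hA, trim_measurableSet_eq _ hA,
      Measure.restrict_apply (ℱ.le n A hA), smul_eq_mul]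
    exact h.measure_le n A hA
  rw [← lintegral_trim (ℱ.le n) hφ, ← lintegral_trim (ℱ.le n) hφ, ← smul_eq_mul,
    ← lintegral_smul_measure]
  exact lintegral_mono' trim_le le_rfl

lemma measurable_indicator (h : IsThick ν ℱ F c) {u : ℕ → X → ℝ≥0∞} (hu : Adapted ℱ u) (n : ℕ) :
    Measurable ((F n).indicator (u n)) :=
  ((hu n).mono (ℱ.le n) le_rfl).indicator (h.measurableSet n)

lemma lintegral_le_of_increments (h : IsThick ν ℱ F c) {A B : ℕ → X → ℝ≥0∞} (hA0 : A 0 = 0)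
    (hA : ∀ n, Measurable[ℱ n] (A (n + 1))) (hA_mono : Monotone A)
    (hB : ∀ n, Measurable (B n)) (hB_mono : Monotone B)
    (hAB : ∀ n, ∀ x ∈ F n, A (n + 1) x + B n x ≤ A n x + B (n + 1) x) (n : ℕ) :
    ∫⁻ x, A n x ∂ν ≤ c * ∫⁻ x, B n x ∂ν := by
  have hA_pred : ∀ n, Measurable[ℱ n] (A n)
    | 0 => by rw [hA0]; exact @measurable_const _ _ _ (ℱ 0) 0
    | n + 1 => (hA n).mono (ℱ.mono n.le_succ) le_rfl
  have increment_le : ∀ n x,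
      B n x + (F n).indicator (fun x => A (n + 1) x - A n x) x ≤ B (n + 1) x := by
    intro n x
    by_cases hx : x ∈ F n
    · rcases eq_or_ne (A n x) ⊤ with hAx | hAx
      · simpa [hx, hAx] using hB_mono n.le_succ x
      · rw [Set.indicator_of_mem hx, ← ENNReal.add_le_add_iff_left hAx, add_left_comm,
          add_tsub_cancel_of_le (hA_mono n.le_succ x), add_comm]
        exact hAB n x hx
    · simpa [hx] using hB_mono n.le_succ x
  induction n with
  | zero => simp [hA0]
  | succ n ih =>
    calc ∫⁻ x, A (n + 1) x ∂ν = ∫⁻ x, A n x ∂ν + ∫⁻ x, (A (n + 1) x - A n x) ∂ν := by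
          rw [← lintegral_add_left ((hA_pred n).mono (ℱ.le n) le_rfl)]
          simp only [add_tsub_cancel_of_le (hA_mono n.le_succ _)]
      _ ≤ c * ∫⁻ x, B n x ∂ν + c * ∫⁻ x in F n, (A (n + 1) x - A n x) ∂ν :=
          add_le_add ih (h.lintegral_le ((hA n).sub (hA_pred n)))
      _ = c * ∫⁻ x, (B n x + (F n).indicator (fun x => A (n + 1) x - A n x) x) ∂ν := by
          rw [lintegral_add_left (hB n), lintegral_indicator (h.measurableSet n), mul_add]
      _ ≤ c * ∫⁻ x, B (n + 1) x ∂ν := by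
          gcongr with x
          exact increment_le n x

section Adapted

variable {u : ℕ → X → ℝ≥0∞}

lemma lintegral_iSup_le (h : IsThick ν ℱ F c) (hu : Adapted ℱ u) :
    ∫⁻ x, ⨆ n, u n x ∂ν ≤ c * ∫⁻ x, ⨆ n, (F n).indicator (u n) x ∂ν := by
  have hu' := h.measurable_indicator hu
  have running_sup_adapted : ∀ n, Measurable[ℱ n] fun x => ⨆ j < n + 1, u j x := fun n =>
    Measurable.biSup _ (Set.to_countable {j | j < n + 1}) fun j hj =>
      (hu j).mono (ℱ.mono (Nat.le_of_lt_succ hj)) le_rfl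
  have running_sup_mono : ∀ v : ℕ → X → ℝ≥0∞, Monotone fun n x => ⨆ j < n, v j x :=
    fun v n n' hn x => biSup_mono fun j hj => hj.trans_le hn
  have iSup_running_sup : ∀ v : ℕ → ℝ≥0∞, ⨆ n, ⨆ j < n, v j = ⨆ j, v j := fun v =>
    le_antisymm (iSup_le fun n => iSup₂_le fun j _ => le_iSup v j)
      (iSup_le fun j => le_iSup_of_le (j + 1) (le_iSup₂_of_le j j.lt_succ_self le_rfl))
  have key := lintegral_iSup_le_mul_lintegral_iSup (ν := ν)
    (A := fun n x => ⨆ j < n, u j x) (B := fun n x => ⨆ j < n, (F j).indicator (u j) x) (C := c)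
    (fun n => Measurable.biSup _ (Set.to_countable {j | j < n}) fun j _ =>
      (hu j).mono (ℱ.le j) le_rfl) (running_sup_mono u) ?_
  · simpa only [iSup_running_sup] using key
  refine h.lintegral_le_of_increments (by ext; simp) running_sup_adapted (running_sup_mono u)
    (fun n => Measurable.biSup _ (Set.to_countable {j | j < n}) fun j _ => hu' j)
    (running_sup_mono _) fun n x hx => ?_
  simp only [Nat.iSup_lt_succ, Set.indicator_of_mem hx]
  have indicator_le : ⨆ j < n, (F j).indicator (u j) x ≤ ⨆ j < n, u j x :=
    iSup₂_mono fun j _ => Set.indicator_le_self _ _ _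
  rcases le_total (u n x) (⨆ j < n, u j x) with hn | hn
  · rw [sup_eq_left.2 hn]
    gcongr
    exact le_sup_left
  · rw [sup_eq_right.2 hn, sup_eq_right.2 (indicator_le.trans hn), add_comm]
    gcongr

lemma lintegral_sum_rpow_le_of_le_one (h : IsThick ν ℱ F c) (hu : Adapted ℱ u) {r : ℝ}
    (hr0 : 0 < r) (hr1 : r ≤ 1) (n : ℕ) :
    ∫⁻ x, (∑ j ∈ Finset.range n, u j x) ^ r ∂ν ≤
      c * ∫⁻ x, (∑ j ∈ Finset.range n, (F j).indicator (u j) x) ^ r ∂ν := by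
  have hu' := h.measurable_indicator hu
  refine h.lintegral_le_of_increments (A := fun n x => (∑ j ∈ Finset.range n, u j x) ^ r)
    (B := fun n x => (∑ j ∈ Finset.range n, (F j).indicator (u j) x) ^ r)
    (by ext; simp [hr0]) ?_ (monotone_sum_range_rpow _ hr0.le) (by fun_prop)
    (monotone_sum_range_rpow _ hr0.le) ?_ n
  · exact fun n => (measurable_sum_range_succ hu n).pow_const r
  · intro n x hx
    simp only [Finset.sum_range_succ, Set.indicator_of_mem hx]
    exact rpow_add_add_rpow_le_rpow_add_rpow_add hr0.le hr1
      (Finset.sum_le_sum fun j _ => Set.indicator_le_self _ _ _) _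

lemma lintegral_sum_rpow_le_lintegral_mul (h : IsThick ν ℱ F c) (hu : Adapted ℱ u) {r : ℝ}
    (hr : 1 < r) (n : ℕ) :
    ∫⁻ x, (∑ j ∈ Finset.range n, u j x) ^ r ∂ν ≤
      ENNReal.ofReal r * c * ∫⁻ x, (∑ j ∈ Finset.range n, (F j).indicator (u j) x) *
        (∑ j ∈ Finset.range n, u j x) ^ (r - 1) ∂ν := by
  have hr0 : 0 < r := by linarith
  have hu' := h.measurable_indicator hu
  have hu_meas : ∀ n, Measurable (u n) := fun n => (hu n).mono (ℱ.le n) le_rfl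
  have key := h.lintegral_le_of_increments
    (A := fun n x => (∑ j ∈ Finset.range n, u j x) ^ r)
    (B := fun n x => ENNReal.ofReal r * ((∑ j ∈ Finset.range n, (F j).indicator (u j) x) *
      (∑ j ∈ Finset.range n, u j x) ^ (r - 1)))
    (by ext; simp [hr0]) (fun n => (measurable_sum_range_succ hu n).pow_const r)
    (monotone_sum_range_rpow _ hr0.le) (by fun_prop)
    (fun n n' hn x => by dsimp only; gcongr) ?_ n
  · rwa [lintegral_const_mul _ (by fun_prop), ← mul_assoc, mul_comm c] at key
  · intro n x hx
    simp only [Finset.sum_range_succ, Set.indicator_of_mem hx]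
    set U := ∑ j ∈ Finset.range n, u j x
    set V := ∑ j ∈ Finset.range n, (F j).indicator (u j) x
    calc (U + u n x) ^ r + ENNReal.ofReal r * (V * U ^ (r - 1))
        ≤ U ^ r + ENNReal.ofReal r * (u n x * (U + u n x) ^ (r - 1)) +
            ENNReal.ofReal r * (V * (U + u n x) ^ (r - 1)) := by
          gcongr
          · exact add_rpow_le_rpow_add_mul hr U (u n x)
          · exact le_self_add
      _ = U ^ r + ENNReal.ofReal r * ((V + u n x) * (U + u n x) ^ (r - 1)) := by ring

lemma lintegral_sum_rpow_ne_top (h : IsThick ν ℱ F c) (hu : Adapted ℱ u) (hc : c ≠ ⊤) {r : ℝ}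
    (hr : 1 ≤ r) {n : ℕ}
    (h_top : ∫⁻ x, (∑ j ∈ Finset.range n, (F j).indicator (u j) x) ^ r ∂ν ≠ ⊤) :
    ∫⁻ x, (∑ j ∈ Finset.range n, u j x) ^ r ∂ν ≠ ⊤ := by
  have hr0 : 0 < r := by linarith
  refine (lintegral_sum_rpow_lt_top hr (fun j _ => (hu j).mono (ℱ.le j) le_rfl) fun j hj => ?_).ne
  calc ∫⁻ x, u j x ^ r ∂ν ≤ c * ∫⁻ x in F j, u j x ^ r ∂ν := h.lintegral_le ((hu j).pow_const r)
    _ = c * ∫⁻ x, (F j).indicator (u j) x ^ r ∂ν := by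
      rw [← lintegral_indicator (h.measurableSet j)]
      congr! 3 with x
      by_cases hx : x ∈ F j <;> simp [hx, hr0]
    _ ≤ c * ∫⁻ x, (∑ j ∈ Finset.range n, (F j).indicator (u j) x) ^ r ∂ν := by
      gcongr with x
      exact Finset.single_le_sum (f := fun j => (F j).indicator (u j) x) (fun _ _ => zero_le) hj
    _ < ⊤ := ENNReal.mul_lt_top hc.lt_top h_top.lt_top

lemma lintegral_sum_rpow_le_of_one_lt (h : IsThick ν ℱ F c) (hu : Adapted ℱ u) (hc : c ≠ ⊤)
    {r : ℝ} (hr : 1 < r) (n : ℕ) :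
    ∫⁻ x, (∑ j ∈ Finset.range n, u j x) ^ r ∂ν ≤ (ENNReal.ofReal r * c) ^ r *
      ∫⁻ x, (∑ j ∈ Finset.range n, (F j).indicator (u j) x) ^ r ∂ν := by
  have hr' := Real.HolderConjugate.conjExponent hr
  have hu' := h.measurable_indicator hu
  have hu_meas : ∀ n, Measurable (u n) := fun n => (hu n).mono (ℱ.le n) le_rfl
  refine le_rpow_mul_of_le_mul hr' (h.lintegral_sum_rpow_ne_top hu hc hr.le)
    ((h.lintegral_sum_rpow_le_lintegral_mul hu hr n).trans ?_)
  gcongr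
  exact ENNReal.lintegral_mul_rpow_le_lintegral_rpow_mul_lintegral_rpow hr'
    (f := fun x => ∑ j ∈ Finset.range n, (F j).indicator (u j) x)
    (g := fun x => ∑ j ∈ Finset.range n, u j x) (by fun_prop) (by fun_prop)

lemma lintegral_tsum_rpow_le (h : IsThick ν ℱ F c) (hu : Adapted ℱ u) (hc : c ≠ ⊤) {r : ℝ}
    (hr : 0 < r) :
    ∫⁻ x, (∑' j, u j x) ^ r ∂ν ≤
      thickConst c r * ∫⁻ x, (∑' j, (F j).indicator (u j) x) ^ r ∂ν := by
  have hu_meas : ∀ n, Measurable (u n) := fun n => (hu n).mono (ℱ.le n) le_rfl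
  have tsum_rpow : ∀ v : ℕ → ℝ≥0∞,
      (∑' j, v j) ^ r = ⨆ n, (∑ j ∈ Finset.range n, v j) ^ r := fun v => by
    rw [ENNReal.tsum_eq_iSup_nat]
    exact (ENNReal.orderIsoRpow r hr).map_iSup _
  simp only [tsum_rpow]
  refine lintegral_iSup_le_mul_lintegral_iSup (by fun_prop) (monotone_sum_range_rpow u hr.le)
    fun n => ?_
  rcases le_or_gt r 1 with hr1 | hr1
  · rw [thickConst_of_le_one c hr1]
    exact h.lintegral_sum_rpow_le_of_le_one hu hr hr1 n
  · rw [thickConst_of_one_le c hr1.le]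
    exact h.lintegral_sum_rpow_le_of_one_lt hu hc hr1 n

theorem lintegral_seqLq_rpow_le (h : IsThick ν ℱ F c) (hu : Adapted ℱ u) (hc : c ≠ ⊤) {p : ℝ}
    (hp : 0 < p) {q : ℝ≥0∞} (hq : 0 < q) :
    ∫⁻ x, seqLq q (fun j => u j x) ^ p ∂ν ≤
      thickConst c (p / q.toReal) * ∫⁻ x, seqLq q (fun j => (F j).indicator (u j) x) ^ p ∂ν := by
  have indicator_rpow : ∀ {r : ℝ}, 0 < r → ∀ j x,
      (F j).indicator (u j) x ^ r = (F j).indicator (fun x => u j x ^ r) x := fun {r} hr j x => by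
    by_cases hx : x ∈ F j <;> simp [hx, hr]
  rcases eq_or_ne q ⊤ with rfl | hq_top
  · have iSup_rpow : ∀ v : ℕ → ℝ≥0∞, (⨆ j, v j) ^ p = ⨆ j, v j ^ p :=
      (ENNReal.orderIsoRpow p hp).map_iSup
    simp only [seqLq, if_pos, iSup_rpow, indicator_rpow hp, ENNReal.toReal_top, div_zero,
      thickConst_of_le_one c zero_le_one]
    exact h.lintegral_iSup_le fun j => (hu j).pow_const p
  · have hq' := ENNReal.toReal_pos hq.ne' hq_top
    simp only [seqLq, if_neg hq_top, ← ENNReal.rpow_mul, one_div_mul_eq_div, indicator_rpow hq']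
    exact h.lintegral_tsum_rpow_le (fun j => (hu j).pow_const _) hc (div_pos hp hq')

end Adapted

end IsThick

namespace ChristSystem

variable {M : Type*} [MetricSpace M] [MeasurableSpace M] {μ : Measure M} (S : ChristSystem M μ)

lemma eq_of_mem_of_mem {j : ℤ} {α β : S.I j} {x : M} (hα : x ∈ S.Q j α) (hβ : x ∈ S.Q j β) :
    α = β := by
  by_contra hne
  exact (S.disjoint_Q j α β hne).subset ⟨hα, hβ⟩

lemma exists_superset {j ℓ : ℤ} (hjℓ : j ≤ ℓ) (β : S.I ℓ) : ∃ α, S.Q ℓ β ⊆ S.Q j α := by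
  rcases hjℓ.eq_or_lt with rfl | hlt
  · exact ⟨β, subset_rfl⟩
  · exact (S.parent ℓ β j hlt).exists

instance (j : ℤ) : Countable (S.I j) := S.countable_I j

instance (j₀ j : ℕ) (t : S.I j) : Countable (SubIdx S j₀ j t) :=
  inferInstanceAs (Countable (Subtype _))

/-- The filtration of the dyadic cubes of level `n + j₀`. Since these cover `M` only up to a null
set, the σ-algebras they generate need not increase with `n`; instead, the events at time `n` are
all measurable sets that contain or miss each of these cubes. -/
def filtration (j₀ : ℕ) : Filtration ℕ ‹MeasurableSpace M› where
  seq n :=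
    { MeasurableSet' := fun A => MeasurableSet A ∧
        ∀ β, S.Q (n + j₀) β ⊆ A ∨ Disjoint (S.Q (n + j₀) β) A
      measurableSet_empty := ⟨.empty, fun _ => .inr (Set.disjoint_empty _)⟩
      measurableSet_compl := fun A hA => ⟨hA.1.compl, fun β => by
        rw [Set.disjoint_compl_right_iff_subset, Set.subset_compl_iff_disjoint_right]
        exact (hA.2 β).symm⟩
      measurableSet_iUnion := fun A hA => ⟨.iUnion fun i => (hA i).1, fun β => by
        by_cases h : ∃ i, S.Q (n + j₀) β ⊆ A i
        · exact .inl (h.elim Set.subset_iUnion_of_subset)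
        · exact .inr (Set.disjoint_iUnion_right.2 fun i =>
            ((hA i).2 β).resolve_left (not_exists.1 h i))⟩ }
  mono' n n' hn A hA := ⟨hA.1, fun β => by
    obtain ⟨α, hα⟩ := S.exists_superset (by gcongr : (n : ℤ) + j₀ ≤ n' + j₀) β
    exact (hA.2 α).imp hα.trans (Disjoint.mono_left hα)⟩
  le' _ _ hA := hA.1

variable {j₀ : ℕ}

lemma measurableSet_filtration_Q [OpensMeasurableSpace M] {n : ℕ} {k : ℤ} (hk : k ≤ n + j₀)
    (α : S.I k) : MeasurableSet[S.filtration j₀ n] (S.Q k α) :=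
  ⟨(S.isOpen_Q k α).measurableSet, fun β => by
    rw [Set.disjoint_iff_inter_eq_empty]
    exact S.nested k _ hk α β⟩

lemma measure_eq_tsum_measure_inter_Q [OpensMeasurableSpace M] (j : ℤ) {A : Set M}
    (hA : MeasurableSet A) : μ A = ∑' β, μ (A ∩ S.Q j β) := by
  have hQ := fun β => (S.isOpen_Q j β).measurableSet
  have hA_cover : A =ᵐ[μ] ⋃ β, A ∩ S.Q j β := by
    rw [← Set.inter_iUnion]
    refine (inter_ae_eq_left_of_ae_eq_univ (ae_eq_univ.2 ?_)).symm
    rw [Set.compl_eq_univ_sdiff]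
    exact S.cover j
  rw [measure_congr hA_cover, measure_iUnion (fun α β hαβ => ?_) fun β => hA.inter (hQ β)]
  exact (Set.disjoint_iff_inter_eq_empty.2 (S.disjoint_Q j α β hαβ)).mono
    Set.inter_subset_right Set.inter_subset_right

end ChristSystem

section Norms

lemma seqLq_mono (q : ℝ≥0∞) : Monotone (seqLq q) := fun b b' hb => by
  unfold seqLq
  split_ifs
  · exact iSup_mono hb
  · gcongr with j
    exact hb j

variable {M : Type*} [MetricSpace M] [MeasurableSpace M] {μ : Measure M} {S : ChristSystem M μ}

lemma lpOn_mono (p : ℝ≥0∞) (A : Set M) : Monotone (lpOn μ p A) := fun g g' hg => by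
  unfold lpOn
  split_ifs
  · exact essSup_mono_ae (.of_forall hg)
  · gcongr with x
    exact hg x

lemma fNorm_mono (p q : ℝ≥0∞) (τ : ℝ) : Monotone (fNorm S p q τ) := fun g g' hg => by
  unfold fNorm
  gcongr with k α
  refine lpOn_mono p _ fun x => seqLq_mono q fun j => ?_
  dsimp only
  split_ifs
  · exact hg j x
  · rfl

lemma fNorm_le_mul_fNorm {p q : ℝ≥0∞} (τ : ℝ) {C : ℝ≥0∞} {g g' : ℕ → M → ℝ≥0∞}
    (h : ∀ k α, lpOn μ p (S.Q k α) (fun x => seqLq q fun j => if k.toNat ≤ j then g j x else 0) ≤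
      C * lpOn μ p (S.Q k α) (fun x => seqLq q fun j => if k.toNat ≤ j then g' j x else 0)) :
    fNorm S p q τ g ≤ C * fNorm S p q τ g' := by
  unfold fNorm
  simp only [ENNReal.mul_iSup]
  refine iSup₂_mono fun k α => ?_
  rw [mul_left_comm]
  gcongr
  exact h k α

end Norms

section SeqFun

variable {M : Type*} [MetricSpace M] [MeasurableSpace M] {μ : Measure M} {S : ChristSystem M μ}
  {j₀ : ℕ} {w : (j : ℕ) → (t : S.I j) → SubIdx S j₀ j t → ℝ≥0∞}
  {E : (j : ℕ) → (t : S.I j) → SubIdx S j₀ j t → Set M}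
  {a : (j : ℕ) → (t : S.I j) → SubIdx S j₀ j t → ℂ} {p q : ℝ≥0∞}

lemma mem_of_mem_subQ (hE : ∀ j t ν, E j t ν ⊆ SubQ S j₀ j t ν) {j : ℕ} {t t' : S.I j}
    {ν : SubIdx S j₀ j t} {ν' : SubIdx S j₀ j t'} {x : M} (hx : x ∈ E j t ν)
    (hx' : x ∈ SubQ S j₀ j t' ν') : x ∈ E j t' ν' := by
  obtain rfl : t = t' := S.eq_of_mem_of_mem (ν.2 (hE _ _ _ hx)) (ν'.2 hx')
  obtain rfl : ν = ν' := Subtype.ext (S.eq_of_mem_of_mem (hE _ _ _ hx) hx')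
  exact hx

lemma seqFunOn_eq_indicator_seqFun (hE : ∀ j t ν, E j t ν ⊆ SubQ S j₀ j t ν) (j : ℕ) :
    seqFunOn S j₀ w E a j = (⋃ t, ⋃ ν, E j t ν).indicator (seqFun S j₀ w a j) := by
  ext x
  by_cases hx : x ∈ ⋃ t, ⋃ ν, E j t ν
  · obtain ⟨t, ν, hxE⟩ := Set.mem_iUnion₂.1 hx
    rw [Set.indicator_of_mem hx]
    refine tsum_congr fun t' => tsum_congr fun ν' => ?_
    have mem_iff : x ∈ E j t' ν' ↔ x ∈ SubQ S j₀ j t' ν' :=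
      ⟨fun h => hE _ _ _ h, mem_of_mem_subQ hE hxE⟩
    by_cases hx' : x ∈ SubQ S j₀ j t' ν' <;> simp [mem_iff, hx']
  · rw [Set.indicator_of_notMem hx]
    simp only [Set.mem_iUnion, not_exists] at hx
    simp [seqFunOn, hx]

lemma measurable_tsum_tsum_mul_indicator {X ι : Type*} {κ : ι → Type*} [Countable ι]
    [∀ i, Countable (κ i)] {_ : MeasurableSpace X} (b : (i : ι) → κ i → ℝ≥0∞)
    {A : (i : ι) → κ i → Set X} (hA : ∀ i k, MeasurableSet (A i k)) :
    Measurable fun x => ∑' (i) (k), b i k * (A i k).indicator (fun _ => (1 : ℝ≥0∞)) x :=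
  Measurable.tsum fun i => Measurable.tsum fun k =>
    (measurable_const.indicator (hA i k)).const_mul (b i k)

lemma adapted_seqFun [OpensMeasurableSpace M] :
    Adapted (S.filtration j₀) (seqFun S j₀ w a) := fun _ =>
  measurable_tsum_tsum_mul_indicator _ fun _ ν => S.measurableSet_filtration_Q le_rfl ν.1

lemma measure_le_mul_measure_inter_iUnion [OpensMeasurableSpace M]
    (hEm : ∀ j t ν, MeasurableSet (E j t ν)) (hE : ∀ j t ν, E j t ν ⊆ SubQ S j₀ j t ν)
    {c : ℝ≥0∞} (hEc : ∀ j t ν, μ (SubQ S j₀ j t ν) ≤ c * μ (E j t ν)) {n : ℕ} {A : Set M}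
    (hA : MeasurableSet[S.filtration j₀ n] A) : μ A ≤ c * μ (A ∩ ⋃ t, ⋃ ν, E n t ν) := by
  have hA' := (S.filtration j₀).le n A hA
  have hE_union : MeasurableSet (⋃ t, ⋃ ν, E n t ν) :=
    .iUnion fun t => .iUnion fun ν => hEm n t ν
  rw [S.measure_eq_tsum_measure_inter_Q (n + j₀) hA',
    S.measure_eq_tsum_measure_inter_Q (n + j₀) (hA'.inter hE_union), ← ENNReal.tsum_mul_left]
  refine ENNReal.tsum_le_tsum fun β => ?_
  rcases hA.2 β with hβA | hβA
  · obtain ⟨t, ht⟩ := S.exists_superset (by lia : (n : ℤ) ≤ n + j₀) β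
    let ν : SubIdx S j₀ n t := ⟨β, ht⟩
    calc μ (A ∩ S.Q (n + j₀) β) ≤ μ (SubQ S j₀ n t ν) := measure_mono Set.inter_subset_right
      _ ≤ c * μ (E n t ν) := hEc n t ν
      _ ≤ c * μ (A ∩ (⋃ t, ⋃ ν, E n t ν) ∩ S.Q (n + j₀) β) := by
        gcongr
        exact fun x hx => ⟨⟨hβA (hE n t ν hx), Set.mem_iUnion₂.2 ⟨t, ν, hx⟩⟩, hE n t ν hx⟩
  · rw [hβA.symm.inter_eq, measure_empty]
    exact zero_le

lemma isThick_restrict_Q [OpensMeasurableSpace M] (hEm : ∀ j t ν, MeasurableSet (E j t ν))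
    (hE : ∀ j t ν, E j t ν ⊆ SubQ S j₀ j t ν) {c : ℝ≥0∞} (hc : 1 ≤ c)
    (hEc : ∀ j t ν, μ (SubQ S j₀ j t ν) ≤ c * μ (E j t ν)) (k : ℤ) (α : S.I k) :
    IsThick (μ.restrict (S.Q k α)) (S.filtration j₀)
      (fun n => if k.toNat ≤ n then ⋃ t, ⋃ ν, E n t ν else Set.univ) c where
  measurableSet n := by
    split_ifs
    · exact .iUnion fun t => .iUnion fun ν => hEm n t ν
    · exact .univ
  measure_le n A hA := by
    have hQ := (S.isOpen_Q k α).measurableSet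
    split_ifs with hk
    · have hAQ := hA.inter (S.measurableSet_filtration_Q (n := n) (j₀ := j₀) (by lia) α)
      rw [Measure.restrict_apply' hQ, Measure.restrict_apply' hQ, Set.inter_right_comm]
      exact measure_le_mul_measure_inter_iUnion hEm hE hEc hAQ
    · rw [Set.inter_univ]
      exact le_mul_of_one_le_left' hc

lemma fNorm_seqFunOn_le_fNorm_seqFun (hE : ∀ j t ν, E j t ν ⊆ SubQ S j₀ j t ν) (τ : ℝ) :
    fNorm S p q τ (seqFunOn S j₀ w E a) ≤ fNorm S p q τ (seqFun S j₀ w a) :=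
  fNorm_mono p q τ fun j => by
    rw [seqFunOn_eq_indicator_seqFun hE j]
    exact Set.indicator_le_self _ _

lemma lpOn_seqLq_seqFun_le [OpensMeasurableSpace M] (hp : 0 < p) (hp_top : p ≠ ⊤) (hq : 0 < q)
    {c : ℝ≥0∞} (hc : 1 ≤ c) (hc_top : c ≠ ⊤) (hEm : ∀ j t ν, MeasurableSet (E j t ν))
    (hE : ∀ j t ν, E j t ν ⊆ SubQ S j₀ j t ν)
    (hEc : ∀ j t ν, μ (SubQ S j₀ j t ν) ≤ c * μ (E j t ν)) (k : ℤ) (α : S.I k) :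
    lpOn μ p (S.Q k α) (fun x => seqLq q fun j => if k.toNat ≤ j then seqFun S j₀ w a j x else 0) ≤
      thickConst c (p.toReal / q.toReal) ^ (1 / p.toReal) * lpOn μ p (S.Q k α)
        (fun x => seqLq q fun j => if k.toNat ≤ j then seqFunOn S j₀ w E a j x else 0) := by
  have hp' := ENNReal.toReal_pos hp.ne' hp_top
  let u : ℕ → M → ℝ≥0∞ := fun j => if k.toNat ≤ j then seqFun S j₀ w a j else 0
  have hu : Adapted (S.filtration j₀) u := fun j => by
    dsimp only [u]
    split_ifs
    · exact adapted_seqFun j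
    · exact @measurable_const _ _ _ (S.filtration j₀ j) 0
  have key := (isThick_restrict_Q hEm hE hc hEc k α).lintegral_seqLq_rpow_le hu hc_top hp' hq
  have hu_apply : ∀ j x, u j x = if k.toNat ≤ j then seqFun S j₀ w a j x else 0 := fun j x => by
    dsimp only [u]; split_ifs <;> rfl
  have indicator_u : ∀ j x,
      (if k.toNat ≤ j then ⋃ t, ⋃ ν, E j t ν else Set.univ).indicator (u j) x =
        if k.toNat ≤ j then seqFunOn S j₀ w E a j x else 0 := fun j x => by
    dsimp only [u]
    split_ifs
    · rw [seqFunOn_eq_indicator_seqFun hE j]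
    · simp
  simp only [lpOn, if_neg hp_top, hu_apply, indicator_u] at key ⊢
  rw [← ENNReal.mul_rpow_of_nonneg _ _ (by positivity)]
  gcongr

end SeqFun

theorem stmt_16_general {ε : ℝ} (hε0 : 0 < ε) (hε1 : ε ≤ 1) {p q : ℝ≥0∞} (hp0 : 0 < p)
    (hpt : p ≠ ⊤) (hq : 0 < q) :
    ∃ C : ℝ, 1 ≤ C ∧
      ∀ {M : Type*} [MetricSpace M] [MeasurableSpace M] [OpensMeasurableSpace M] {μ : Measure M}
        (S : ChristSystem M μ) (j₀ : ℕ) (τ : ℝ)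
        (w : (j : ℕ) → (t : S.I j) → SubIdx S j₀ j t → ℝ≥0∞)
        (E : (j : ℕ) → (t : S.I j) → SubIdx S j₀ j t → Set M),
        (∀ j t ν, MeasurableSet (E j t ν)) →
        (∀ j t ν, E j t ν ⊆ SubQ S j₀ j t ν) →
        (∀ j t ν, ENNReal.ofReal ε * μ (SubQ S j₀ j t ν) ≤ μ (E j t ν)) →
        ∀ a : (j : ℕ) → (t : S.I j) → SubIdx S j₀ j t → ℂ,
          fNorm S p q τ (seqFun S j₀ w a) ≤
              ENNReal.ofReal C * fNorm S p q τ (seqFunOn S j₀ w E a) ∧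
            fNorm S p q τ (seqFunOn S j₀ w E a) ≤ fNorm S p q τ (seqFun S j₀ w a) := by
  have hε0' : ENNReal.ofReal ε ≠ 0 := by simpa using hε0
  set c := (ENNReal.ofReal ε)⁻¹
  have hc : 1 ≤ c := by simpa [c] using hε1
  have hc_top : c ≠ ⊤ := by simpa [c] using hε0
  set C := thickConst c (p.toReal / q.toReal) ^ (1 / p.toReal)
  have hC_top : C ≠ ⊤ := ENNReal.rpow_ne_top_of_nonneg (by positivity) (thickConst_ne_top hc_top _)
  refine ⟨max 1 C.toReal, le_max_left _ _, fun {M} _ _ _ μ S j₀ τ w E hEm hE hEε a =>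
    ⟨fNorm_le_mul_fNorm τ fun k α => ?_, fNorm_seqFunOn_le_fNorm_seqFun hE τ⟩⟩
  have hEc : ∀ j t ν, μ (SubQ S j₀ j t ν) ≤ c * μ (E j t ν) := fun j t ν =>
    (ENNReal.mul_le_iff_le_inv hε0' ENNReal.ofReal_ne_top).1 (hEε j t ν)
  refine (lpOn_seqLq_seqFun_le hp0 hpt hq hc hc_top hEm hE hEc k α).trans ?_
  gcongr
  exact (ENNReal.le_ofReal_iff_toReal_le hC_top (by positivity)).2 (le_max_right _ _)

theorem stmt_16 {M : Type*} [MetricSpace M] [MeasurableSpace M] [BorelSpace M]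
    (μ : Measure M)
    (hball : ∀ (x : M) (r : ℝ), 0 < r → 0 < μ (ball x r) ∧ μ (ball x r) < ⊤)
    (K d : ℝ) (hK : 1 < K) (hd : d = Real.logb 2 K)
    (hdoub : ∀ (x : M) (r lam : ℝ), 0 < r → 1 ≤ lam →
      μ (ball x (lam * r)) ≤ ENNReal.ofReal (K * lam ^ d) * μ (ball x r))
    (S : ChristSystem M μ) (j₀ : ℕ)
    (hfin : ∀ (j : ℕ) (t : S.I j), Finite (SubIdx S j₀ j t))
    (ε : ℝ) (hε0 : 0 < ε) (hε1 : ε ≤ 1)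
    (s τ : ℝ) (hτ : 0 ≤ τ)
    (p q : ℝ≥0∞) (hp0 : 0 < p) (hpt : p ≠ ⊤) (hq : 0 < q) :
    ∃ C : ℝ, 1 ≤ C ∧
      ∀ E : (j : ℕ) → (t : S.I j) → SubIdx S j₀ j t → Set M,
        (∀ (j : ℕ) (t : S.I j) (ν : SubIdx S j₀ j t), MeasurableSet (E j t ν)) →
        (∀ (j : ℕ) (t : S.I j) (ν : SubIdx S j₀ j t), E j t ν ⊆ SubQ S j₀ j t ν) →
        (∀ (j : ℕ) (t : S.I j) (ν : SubIdx S j₀ j t),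
          ENNReal.ofReal ε * μ (SubQ S j₀ j t ν) ≤ μ (E j t ν)) →
        ∀ a : (j : ℕ) → (t : S.I j) → SubIdx S j₀ j t → ℂ,
          (fNorm S p q τ (seqFun S j₀ (deltaWeight S j₀ s) a) ≤
              ENNReal.ofReal C * fNorm S p q τ (seqFunOn S j₀ (deltaWeight S j₀ s) E a)) ∧
          (fNorm S p q τ (seqFunOn S j₀ (deltaWeight S j₀ s) E a) ≤
              fNorm S p q τ (seqFun S j₀ (deltaWeight S j₀ s) a)) ∧
          (fNorm S p q τ (seqFun S j₀ (tildeWeight S j₀ d s) a) ≤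
              ENNReal.ofReal C * fNorm S p q τ (seqFunOn S j₀ (tildeWeight S j₀ d s) E a)) ∧
          (fNorm S p q τ (seqFunOn S j₀ (tildeWeight S j₀ d s) E a) ≤
              fNorm S p q τ (seqFun S j₀ (tildeWeight S j₀ d s) a)) := by
  obtain ⟨C, hC, h⟩ := stmt_16_general hε0 hε1 hp0 hpt hq
  refine ⟨C, hC, fun E hEm hE hEε a => ?_⟩
  have bounds := fun w => h S j₀ τ w E hEm hE hEε a
  exact ⟨(bounds _).1, (bounds _).2, bounds _⟩
end

section
/- Let μ be a (K,d)-doubling Borel measure on a metric space (M,ρ) endowed with a Christ dyadic cube system with parameter δ ∈ (0,1) and with the level-j₀ subcube families. Let s ∈ ℝ and q ∈ (0,∞]. For a family a = {a_t^{j,ν}} of complex numbers and for k ∈ ℤ₊, α ∈ I_k, 1 ≤ u ≤ N_α^k, define G̃^{s,q}_{k,α,u}(a)(x) := ( ∑_{j=k}^∞ ( ∑_{t∈I_j}∑_{ν=1}^{N_t^j} μ(Q_t^{j,ν})^{−s/d}|a_t^{j,ν}|χ_{Q_t^{j,ν}}(x)χ_{Q_α^{k,u}}(x) )^q )^{1/q}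 (usual modification when q = ∞), m̃^{s,q}_{k,α,u}(a) := inf{ λ > 0 : μ({x ∈ Q_α^{k,u} : G̃^{s,q}_{k,α,u}(a)(x) > λ}) < μ(Q_α^{k,u})/4 }, and m̃^{s,q}(a)(x) := sup_{k∈ℤ₊, α∈I_k, 1≤u≤N_α^k} m̃^{s,q}_{k,α,u}(a)·χ_{Q_α^{k,u}}(x). Then there exists a constant C ≥ 1 such that for every such family a: C^{−1}·‖a‖_{f̃^{s,1/q}_{q,q}} ≤ ‖m̃^{s,q}(a)‖_{L^∞(M)} ≤ C·‖a‖_{f̃^{s,1/q}_{q,q}}. The same holds with μ(Q_t^{j,ν})^{−s/d} replaced throughout by δ^{−js} and f̃^{s,1/q}_{q,q} replaced by f^{s,1/q}_{q,q}. -/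
open MeasureTheory Metric
open scoped ENNReal

/-- The truncated square-type function
`G^{s,q}_{k,α,u}(a)(x) = ( ∑_{j=k}^∞ ( (∑_{t,ν} w |a| χ_{Q_t^{j,ν}})(x) χ_{Q_α^{k,u}}(x) )^q )^{1/q}`. -/
noncomputable def Gfun {M : Type*} [MetricSpace M] [MeasurableSpace M] {μ : Measure M}
    (S : ChristSystem M μ) (j₀ : ℕ)
    (w : (j : ℕ) → (t : S.I j) → SubIdx S j₀ j t → ℝ≥0∞)
    (a : (j : ℕ) → (t : S.I j) → SubIdx S j₀ j t → ℂ) (q : ℝ≥0∞)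
    (k : ℕ) (α : S.I k) (u : SubIdx S j₀ k α) (x : M) : ℝ≥0∞ :=
  seqLq q (fun j => if k ≤ j then
    seqFun S j₀ w a j x * (SubQ S j₀ k α u).indicator (fun _ => (1 : ℝ≥0∞)) x else 0)

/-- The median-type quantity
`m^{s,q}_{k,α,u}(a) = inf{ λ > 0 : μ({x ∈ Q_α^{k,u} : G^{s,q}_{k,α,u}(a)(x) > λ}) < μ(Q_α^{k,u})/4 }`. -/
noncomputable def mQuant {M : Type*} [MetricSpace M] [MeasurableSpace M] {μ : Measure M}
    (S : ChristSystem M μ) (j₀ : ℕ)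
    (w : (j : ℕ) → (t : S.I j) → SubIdx S j₀ j t → ℝ≥0∞)
    (a : (j : ℕ) → (t : S.I j) → SubIdx S j₀ j t → ℂ) (q : ℝ≥0∞)
    (k : ℕ) (α : S.I k) (u : SubIdx S j₀ k α) : ℝ≥0∞ :=
  sInf {lam : ℝ≥0∞ | 0 < lam ∧
    μ {x ∈ SubQ S j₀ k α u | lam < Gfun S j₀ w a q k α u x} < μ (SubQ S j₀ k α u) / 4}

/-- The maximal median function
`m^{s,q}(a)(x) = sup_{k ∈ ℤ₊, α ∈ I_k, 1 ≤ u ≤ N_α^k} m^{s,q}_{k,α,u}(a) χ_{Q_α^{k,u}}(x)`. -/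
noncomputable def mMax {M : Type*} [MetricSpace M] [MeasurableSpace M] {μ : Measure M}
    (S : ChristSystem M μ) (j₀ : ℕ)
    (w : (j : ℕ) → (t : S.I j) → SubIdx S j₀ j t → ℝ≥0∞)
    (a : (j : ℕ) → (t : S.I j) → SubIdx S j₀ j t → ℂ) (q : ℝ≥0∞) (x : M) : ℝ≥0∞ :=
  ⨆ (k : ℕ) (α : S.I k) (u : SubIdx S j₀ k α),
    mQuant S j₀ w a q k α u * (SubQ S j₀ k α u).indicator (fun _ => (1 : ℝ≥0∞)) x

/-!
Write `g_j` for the level-`j` function of the family, `T_k` for the `ℓ^q` norm of the tail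
`(g_j)_{j ≥ k}`, and `L` for the essential supremum of the maximal median function. On a subcube
`P` of level `k` the median is an upper quantile of `T_k`, and it is at most `L`.

Hence the good set `E_k = {T_k ≤ L}` fills at least half of `P`. Since `g_k` is constant on `P`, its
`q`-th power integrates over a cube to at most twice its integral over `E_k`. At each point, the sum
of `g_j ^ q` over the levels `j` with `x ∈ E_j` is bounded by the tail starting at the first such
level, that is, by `L ^ q`. For `q = ∞`, each value of `g_k` on `P` is already taken on `P ∩ E_k`.

Conversely, if `T_k > t` on at least a quarter of `P`, Chebyshev's inequality on the parent cube,
whose measure is comparable with that of `P` by doubling, bounds `t` by a multiple of the norm.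
-/

section Quantile

variable {α : Type*} [MeasurableSpace α] {μ : Measure α} {A E : Set α} {c : ℝ≥0∞} {f : α → ℝ≥0∞}

/-- The upper quantile `inf {t > 0 : μ {x ∈ A : f x > t} < c}` of `f` on `A`, with the threshold
given as an absolute mass `c`. The median-type quantity `mQuant` is the case `c = μ A / 4`. -/
noncomputable def upperQuantile (μ : Measure α) (A : Set α) (c : ℝ≥0∞) (f : α → ℝ≥0∞) : ℝ≥0∞ :=
  sInf {t | 0 < t ∧ μ {x ∈ A | t < f x} < c}

theorem upperQuantile_le_of_forall_gt {b : ℝ≥0∞} (h : ∀ t, b < t → μ {x ∈ A | t < f x} < c) :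
    upperQuantile μ A c f ≤ b :=
  le_of_forall_gt_imp_ge_of_dense fun t ht => sInf_le ⟨bot_le.trans_lt ht, h t ht⟩

theorem measure_upperQuantile_lt_le : μ {x ∈ A | upperQuantile μ A c f < f x} ≤ c := by
  rcases eq_or_ne (upperQuantile μ A c f) ⊤ with htop | htop
  · simp [htop]
  obtain ⟨v, hv_anti, hv_gt, hv_tendsto⟩ :=
    exists_seq_strictAnti_tendsto' (lt_top_iff_ne_top.2 htop)
  have hunion : {x ∈ A | upperQuantile μ A c f < f x} = ⋃ n, {x ∈ A | v n < f x} := by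
    ext x
    simp only [Set.mem_ofPred_eq, Set.mem_iUnion, exists_and_left]
    refine and_congr_right fun _ => ⟨fun hx => (hv_tendsto.eventually_lt_const hx).exists, ?_⟩
    rintro ⟨n, hn⟩
    exact (hv_gt n).1.trans hn
  have hmono : Monotone fun n => {x ∈ A | v n < f x} := fun m n hmn x hx =>
    ⟨hx.1, (hv_anti.antitone hmn).trans_lt hx.2⟩
  rw [hunion, hmono.measure_iUnion]
  refine iSup_le fun n => ?_
  obtain ⟨t, ⟨-, ht⟩, htv⟩ := sInf_lt_iff.1 (hv_gt n).1
  refine (measure_mono ?_).trans ht.le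
  rintro x ⟨hxA, hx⟩
  exact ⟨hxA, htv.trans hx⟩

theorem measure_le_two_mul_measure_inter (hA : μ A ≠ ⊤) (hE : MeasurableSet E)
    (h : μ (A \ E) ≤ μ A / 2) : μ A ≤ 2 * μ (A ∩ E) := by
  have hhalf : μ A / 2 ≤ μ (A ∩ E) := by
    refine ENNReal.le_of_add_le_add_right (ENNReal.div_ne_top hA two_ne_zero) ?_
    calc μ A / 2 + μ A / 2 = μ (A ∩ E) + μ (A \ E) := by
          rw [ENNReal.add_halves, measure_inter_add_sdiff A hE]
      _ ≤ μ (A ∩ E) + μ A / 2 := by gcongr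
  rw [mul_comm]
  exact (ENNReal.div_le_iff two_ne_zero ENNReal.ofNat_ne_top).1 hhalf

end Quantile

section Integration

open scoped Function

variable {α : Type*} [MeasurableSpace α] {μ : Measure α}

theorem le_mul_eLpNorm_of_forall_mem_le [IsFiniteMeasure μ] [NeZero μ] {B : Set α} {f : α → ℝ≥0∞}
    {N p t : ℝ≥0∞} (hp : p ≠ 0) (hB : MeasurableSet B) (hN : μ Set.univ ≤ N * μ B)
    (ht : ∀ x ∈ B, t ≤ f x) :
    t ≤ N ^ (p⁻¹).toReal * (μ Set.univ ^ (-(p⁻¹).toReal) * eLpNorm f p μ) := by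
  have hμ : μ Set.univ ≠ 0 := NeZero.ne _
  have hμB : μ B ≠ 0 := fun h => hμ (by simpa [h] using hN)
  have hτ : 0 ≤ (p⁻¹).toReal := ENNReal.toReal_nonneg
  have hone : 1 ≤ N ^ (p⁻¹).toReal * (μ Set.univ ^ (-(p⁻¹).toReal) * μ B ^ (p⁻¹).toReal) :=
    calc 1 = μ Set.univ ^ (-(p⁻¹).toReal) * μ Set.univ ^ (p⁻¹).toReal := by
          rw [← ENNReal.rpow_add _ _ hμ (measure_ne_top _ _), neg_add_cancel, ENNReal.rpow_zero]
      _ ≤ μ Set.univ ^ (-(p⁻¹).toReal) * (N * μ B) ^ (p⁻¹).toReal := by gcongr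
      _ = N ^ (p⁻¹).toReal * (μ Set.univ ^ (-(p⁻¹).toReal) * μ B ^ (p⁻¹).toReal) := by
          rw [ENNReal.mul_rpow_of_nonneg _ _ hτ, mul_left_comm]
  have hnorm : t * μ B ^ (p⁻¹).toReal ≤ eLpNorm f p μ := by
    calc t * μ B ^ (p⁻¹).toReal = eLpNorm (B.indicator fun _ => t) p μ := by
          rw [eLpNorm_indicator_const' hB hμB hp, enorm_eq_self, ENNReal.toReal_inv, one_div]
      _ ≤ eLpNorm f p μ := eLpNorm_mono_enorm fun x => by
          simpa only [enorm_eq_self] using Set.indicator_le ht x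
  calc t ≤ t * (N ^ (p⁻¹).toReal * (μ Set.univ ^ (-(p⁻¹).toReal) * μ B ^ (p⁻¹).toReal)) :=
        le_mul_of_one_le_right' hone
    _ = N ^ (p⁻¹).toReal * (μ Set.univ ^ (-(p⁻¹).toReal) * (t * μ B ^ (p⁻¹).toReal)) := by ring
    _ ≤ N ^ (p⁻¹).toReal * (μ Set.univ ^ (-(p⁻¹).toReal) * eLpNorm f p μ) := by gcongr

theorem lintegral_le_mul_setLIntegral_of_eq_on_cells {ι : Type*} [Countable ι] {P : ι → Set α}
    (hP : ∀ i, MeasurableSet (P i)) (hdisj : Pairwise (Disjoint on P)) {f : α → ℝ≥0∞}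
    (hsupp : Function.support f ⊆ ⋃ i, P i) {c : ι → ℝ≥0∞} (hc : ∀ i, ∀ x ∈ P i, f x = c i)
    {E : Set α} (hE : MeasurableSet E) {N : ℝ≥0∞} (hN : ∀ i, μ (P i) ≤ N * μ (P i ∩ E)) :
    ∫⁻ x, f x ∂μ ≤ N * ∫⁻ x in E, f x ∂μ := by
  have hcell : ∀ i, ∀ s ⊆ P i, MeasurableSet s → ∫⁻ x in s, f x ∂μ = c i * μ s := fun i s hs hsm =>
    by rw [setLIntegral_congr_fun hsm fun x hx => hc i x (hs hx), setLIntegral_const]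
  calc ∫⁻ x, f x ∂μ = ∑' i, ∫⁻ x in P i, f x ∂μ := by
        rw [← setLIntegral_eq_of_support_subset hsupp, lintegral_iUnion hP hdisj]
    _ ≤ ∑' i, N * ∫⁻ x in P i ∩ E, f x ∂μ := by
        refine ENNReal.tsum_le_tsum fun i => ?_
        rw [hcell i _ subset_rfl (hP i), hcell i _ Set.inter_subset_left ((hP i).inter hE),
          mul_left_comm]
        gcongr
        exact hN i
    _ = N * ∫⁻ x in ⋃ i, P i ∩ E, f x ∂μ := by
        rw [ENNReal.tsum_mul_left, lintegral_iUnion (fun i => (hP i).inter hE) fun i j hij =>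
          (hdisj hij).mono Set.inter_subset_left Set.inter_subset_left]
    _ ≤ N * ∫⁻ x in E, f x ∂μ := by
        gcongr
        exact Set.iUnion_subset fun i => Set.inter_subset_right

/-- The stopping-time step: the first index in `s` dominates all the others. -/
theorem tsum_indicator_le_of_tail_le {u : ℕ → ℝ≥0∞} {s : Set ℕ} {b : ℝ≥0∞}
    (h : ∀ n ∈ s, ∑' j, u (n + j) ≤ b) : ∑' j, s.indicator u j ≤ b := by
  rcases s.eq_empty_or_nonempty with rfl | hs
  · simp
  have hsupp : Function.support (s.indicator u) ⊆ Set.range (sInf s + ·) := fun j hj =>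
    ⟨j - sInf s, Nat.add_sub_cancel' (Nat.sInf_le (Set.mem_of_indicator_ne_zero hj))⟩
  calc ∑' j, s.indicator u j = ∑' j, s.indicator u (sInf s + j) :=
        ((add_right_injective _).tsum_eq hsupp).symm
    _ ≤ ∑' j, u (sInf s + j) := ENNReal.tsum_le_tsum fun j => Set.indicator_le_self' (by simp) _
    _ ≤ b := h _ (Nat.sInf_mem hs)

theorem lintegral_tsum_le_of_tail_le {h : ℕ → α → ℝ≥0∞} (hh : ∀ j, Measurable (h j))
    {E : ℕ → Set α} (hE : ∀ j, MeasurableSet (E j)) {N b : ℝ≥0∞}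
    (hN : ∀ j, ∫⁻ x, h j x ∂μ ≤ N * ∫⁻ x in E j, h j x ∂μ)
    (hb : ∀ n, ∀ x ∈ E n, ∑' j, h (n + j) x ≤ b) :
    ∫⁻ x, ∑' j, h j x ∂μ ≤ N * (b * μ Set.univ) := by
  calc ∫⁻ x, ∑' j, h j x ∂μ = ∑' j, ∫⁻ x, h j x ∂μ := lintegral_tsum fun j => (hh j).aemeasurable
    _ ≤ ∑' j, N * ∫⁻ x, (E j).indicator (h j) x ∂μ := by
        gcongr with j
        rw [lintegral_indicator (hE j)]
        exact hN j
    _ = N * ∫⁻ x, ∑' j, (E j).indicator (h j) x ∂μ := by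
        rw [ENNReal.tsum_mul_left, lintegral_tsum fun j => ((hh j).indicator (hE j)).aemeasurable]
    _ ≤ N * ∫⁻ _, b ∂μ := by
        gcongr with x
        exact tsum_indicator_le_of_tail_le (s := {j | x ∈ E j}) (u := fun j => h j x)
          fun n hn => hb n x hn
    _ = N * (b * μ Set.univ) := by rw [lintegral_const]

end Integration

section Tail

variable {α : Type*} {q : ℝ≥0∞} {g : ℕ → α → ℝ≥0∞} {k : ℕ} {x : α}

/-- The pointwise `ℓ^q` norm of the tail `(g_j)_{j ≥ k}` of a sequence of functions: the integrand
of `fNorm`, and on `Q_α^{k,u}` the value of `Gfun`. -/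
noncomputable def tailLq (q : ℝ≥0∞) (g : ℕ → α → ℝ≥0∞) (k : ℕ) (x : α) : ℝ≥0∞ :=
  seqLq q fun j => if k ≤ j then g j x else 0

theorem measurable_tailLq [MeasurableSpace α] (hg : ∀ j, Measurable (g j)) :
    Measurable (tailLq q g k) := by
  have hterm : ∀ j, Measurable fun x => if k ≤ j then g j x else 0 := fun j => by
    split_ifs
    exacts [hg j, measurable_const]
  unfold tailLq seqLq
  split_ifs
  · exact Measurable.iSup hterm
  · exact (Measurable.tsum fun j => (hterm j).pow_const _).pow_const _

theorem tailLq_top_le_iff {b : ℝ≥0∞} : tailLq ⊤ g k x ≤ b ↔ ∀ j, k ≤ j → g j x ≤ b := by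
  simp only [tailLq, seqLq, if_true, iSup_le_iff]
  refine forall_congr' fun j => ?_
  split_ifs with hj <;> simp [hj]

theorem tailLq_rpow (hq : q ≠ 0) (hq' : q ≠ ⊤) :
    tailLq q g k x ^ q.toReal = ∑' j, g (k + j) x ^ q.toReal := by
  have hr : 0 < q.toReal := ENNReal.toReal_pos hq hq'
  rw [tailLq, seqLq, if_neg hq', one_div, ENNReal.rpow_inv_rpow hr.ne',
    ← (add_right_injective k).tsum_eq]
  · simp
  · intro j hj
    have hkj : k ≤ j := by
      by_contra hlt
      simp [hlt, hr] at hj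
    exact ⟨j - k, Nat.add_sub_cancel' hkj⟩

end Tail

section Norms

variable {M : Type*} [MetricSpace M] [MeasurableSpace M] {μ : Measure M}

theorem lpOn_eq_eLpNorm {p : ℝ≥0∞} (hp : p ≠ 0) (A : Set M) (g : M → ℝ≥0∞) :
    lpOn μ p A g = eLpNorm g p (μ.restrict A) := by
  rcases eq_or_ne p ⊤ with rfl | hp'
  · simp [lpOn, eLpNormEssSup_eq_essSup_enorm]
  · simp [lpOn, hp', eLpNorm_eq_lintegral_rpow_enorm_toReal hp hp']

theorem fNorm_le_iff {S : ChristSystem M μ} {p q b : ℝ≥0∞} {τ : ℝ} {g : ℕ → M → ℝ≥0∞} :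
    fNorm S p q τ g ≤ b ↔
      ∀ k (α : S.I k), μ (S.Q k α) ^ (-τ) * lpOn μ p (S.Q k α) (tailLq q g k.toNat) ≤ b := by
  simp only [fNorm, iSup_le_iff]
  rfl

theorem measure_rpow_neg_mul_lpOn_le {A : Set M} {f : M → ℝ≥0∞} {p N b : ℝ≥0∞} (hp : p ≠ 0)
    (hp' : p ≠ ⊤) (h : ∫⁻ x in A, f x ^ p.toReal ∂μ ≤ N * (b ^ p.toReal * μ A)) :
    μ A ^ (-(p⁻¹).toReal) * lpOn μ p A f ≤ N ^ (p⁻¹).toReal * b := by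
  have hr : 0 < p.toReal := ENNReal.toReal_pos hp hp'
  rw [lpOn, if_neg hp', ENNReal.toReal_inv, one_div, ← ENNReal.rpow_le_rpow_iff hr,
    ENNReal.mul_rpow_of_nonneg _ _ hr.le, ENNReal.mul_rpow_of_nonneg _ _ hr.le,
    ENNReal.rpow_inv_rpow hr.ne', ENNReal.rpow_inv_rpow hr.ne', ← ENNReal.rpow_mul, neg_mul,
    inv_mul_cancel₀ hr.ne', ENNReal.rpow_neg_one]
  calc (μ A)⁻¹ * ∫⁻ x in A, f x ^ p.toReal ∂μ ≤ (μ A)⁻¹ * (N * (b ^ p.toReal * μ A)) := by gcongr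
    _ = N * b ^ p.toReal * ((μ A)⁻¹ * μ A) := by ring
    _ ≤ N * b ^ p.toReal := mul_le_of_le_one_right' (ENNReal.inv_mul_le_one _)

end Norms

namespace ChristSystem

section Geometry

variable {M : Type*} [MetricSpace M] [MeasurableSpace M] {μ : Measure M} (S : ChristSystem M μ)

theorem center_mem (j : ℤ) (α : S.I j) : S.center j α ∈ S.Q j α :=
  S.ball_subset j α (mem_ball_self (mul_pos S.cSmall_pos (zpow_pos S.δ_pos j)))

theorem cBig_pos : 0 < S.cBig :=
  S.cSmall_pos.trans S.cSmall_lt_cBig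

theorem Q_subset_ball {j : ℤ} {α : S.I j} {z : M} (hz : z ∈ S.Q j α) :
    S.Q j α ⊆ ball z (2 * S.cBig * S.δ ^ j) := by
  intro x hx
  have hr : 0 < S.cBig * S.δ ^ j := mul_pos S.cBig_pos (zpow_pos S.δ_pos j)
  have hdist : edist x z ≤ ENNReal.ofReal (S.cBig * S.δ ^ j) :=
    (edist_le_ediam_of_mem hx hz).trans (S.diam_le j α)
  rw [edist_dist, ENNReal.ofReal_le_ofReal_iff hr.le] at hdist
  rw [mem_ball]
  linarith

theorem measure_Q_pos_lt_top
    (hball : ∀ (x : M) (r : ℝ), 0 < r → 0 < μ (ball x r) ∧ μ (ball x r) < ⊤)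
    (j : ℤ) (α : S.I j) : 0 < μ (S.Q j α) ∧ μ (S.Q j α) < ⊤ := by
  have hδ : 0 < S.δ ^ j := zpow_pos S.δ_pos j
  exact ⟨(hball _ _ (mul_pos S.cSmall_pos hδ)).1.trans_le (measure_mono (S.ball_subset j α)),
    (measure_mono (S.Q_subset_ball (S.center_mem j α))).trans_lt
      (hball _ _ (mul_pos (mul_pos two_pos S.cBig_pos) hδ)).2⟩

theorem measure_Q_le_mul_measure_subQ {K d : ℝ}
    (hdoub : ∀ (x : M) (r lam : ℝ), 0 < r → 1 ≤ lam →
      μ (ball x (lam * r)) ≤ ENNReal.ofReal (K * lam ^ d) * μ (ball x r))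
    {j₀ k : ℕ} (α : S.I k) (u : SubIdx S j₀ k α) :
    μ (S.Q k α) ≤ ENNReal.ofReal (K * (2 * S.cBig / (S.cSmall * S.δ ^ j₀)) ^ d) *
      μ (SubQ S j₀ k α u) := by
  have hc := S.cSmall_pos
  have hδ := S.δ_pos
  have hr : 0 < S.cSmall * S.δ ^ ((k : ℤ) + j₀) := mul_pos hc (zpow_pos hδ _)
  have hratio : 1 ≤ 2 * S.cBig / (S.cSmall * S.δ ^ j₀) := by
    rw [le_div_iff₀ (by positivity)]
    nlinarith [S.cSmall_lt_cBig, pow_le_one₀ (n := j₀) hδ.le S.δ_lt_one.le]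
  have hradius : 2 * S.cBig / (S.cSmall * S.δ ^ j₀) * (S.cSmall * S.δ ^ ((k : ℤ) + j₀)) =
      2 * S.cBig * S.δ ^ (k : ℤ) := by
    rw [zpow_add₀ hδ.ne', zpow_natCast _ j₀]
    field_simp
  calc μ (S.Q k α) ≤ μ (ball (S.center _ u.1) (2 * S.cBig * S.δ ^ (k : ℤ))) :=
        measure_mono (S.Q_subset_ball (u.2 (S.center_mem _ u.1)))
    _ ≤ _ := hradius ▸ hdoub (S.center _ u.1) _ _ hr hratio
    _ ≤ _ := by
        gcongr
        exact S.ball_subset _ u.1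

variable (j₀ j : ℕ)

theorem countable_sigma_subIdx : Countable (Σ t : S.I j, SubIdx S j₀ j t) := by
  have := S.countable_I
  have (t : S.I j) : Countable (SubIdx S j₀ j t) := by
    unfold SubIdx
    infer_instance
  infer_instance

theorem pairwise_disjoint_subQ :
    Pairwise (Function.onFun Disjoint
      fun i : Σ t : S.I j, SubIdx S j₀ j t => SubQ S j₀ j i.1 i.2) := by
  rintro ⟨t, β, hβ⟩ ⟨t', β', hβ'⟩ hne
  rcases eq_or_ne t t' with rfl | ht
  · have hββ' : β ≠ β' := by
      rintro rfl
      exact hne rfl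
    exact Set.disjoint_iff_inter_eq_empty.2 (S.disjoint_Q _ _ _ hββ')
  · exact (Set.disjoint_iff_inter_eq_empty.2 (S.disjoint_Q _ _ _ ht)).mono hβ hβ'

variable {j₀ j}

theorem measurableSet_Q [BorelSpace M] (k : ℤ) (α : S.I k) : MeasurableSet (S.Q k α) :=
  (S.isOpen_Q k α).measurableSet

theorem measurableSet_subQ [BorelSpace M] (t : S.I j) (ν : SubIdx S j₀ j t) :
    MeasurableSet (SubQ S j₀ j t ν) :=
  S.measurableSet_Q _ ν.1

theorem restrict_subQ_le_mul_restrict_inter [BorelSpace M] {k : ℤ} (hk : k.toNat ≤ j) (α : S.I k)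
    {t : S.I j} {ν : SubIdx S j₀ j t} {E : Set M} {N : ℝ≥0∞}
    (hN : μ (SubQ S j₀ j t ν) ≤ N * μ (SubQ S j₀ j t ν ∩ E)) :
    μ.restrict (S.Q k α) (SubQ S j₀ j t ν) ≤ N * μ.restrict (S.Q k α) (SubQ S j₀ j t ν ∩ E) := by
  have hQ := S.measurableSet_Q k α
  have hnested : SubQ S j₀ j t ν ⊆ S.Q k α ∨ SubQ S j₀ j t ν ∩ S.Q k α = ∅ :=
    S.nested k ((j : ℤ) + j₀) (by lia) α ν.1
  rcases hnested with hsub | hempty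
  · rwa [Measure.restrict_eq_self _ hsub,
      Measure.restrict_eq_self _ (Set.inter_subset_left.trans hsub)]
  · rw [Measure.restrict_apply' hQ, hempty, measure_empty]
    exact zero_le

end Geometry

section LevelFunction

variable {M : Type*} [MetricSpace M] [MeasurableSpace M] {μ : Measure M} {S : ChristSystem M μ}
  {j₀ : ℕ} (w : (j : ℕ) → (t : S.I j) → SubIdx S j₀ j t → ℝ≥0∞)
  (a : (j : ℕ) → (t : S.I j) → SubIdx S j₀ j t → ℂ)

theorem seqFun_eq_tsum_sigma (j : ℕ) (x : M) :
    seqFun S j₀ w a j x = ∑' i : Σ t : S.I j, SubIdx S j₀ j t,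
      w j i.1 i.2 * ‖a j i.1 i.2‖₊ * (SubQ S j₀ j i.1 i.2).indicator (fun _ => 1) x := by
  rw [ENNReal.tsum_sigma']
  rfl

theorem measurable_seqFun [BorelSpace M] (j : ℕ) : Measurable (seqFun S j₀ w a j) := by
  have := S.countable_sigma_subIdx j₀ j
  rw [funext (seqFun_eq_tsum_sigma w a j)]
  exact Measurable.tsum fun i =>
    (measurable_const.indicator (S.measurableSet_subQ i.1 i.2)).const_mul _

theorem seqFun_of_mem_subQ {j : ℕ} {t : S.I j} {ν : SubIdx S j₀ j t} {x : M}
    (hx : x ∈ SubQ S j₀ j t ν) : seqFun S j₀ w a j x = w j t ν * ‖a j t ν‖₊ := by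
  rw [seqFun_eq_tsum_sigma, tsum_eq_single ⟨t, ν⟩, Set.indicator_of_mem hx, mul_one]
  intro i hi
  rw [Set.indicator_of_notMem, mul_zero]
  exact Set.disjoint_right.1 (S.pairwise_disjoint_subQ j₀ j hi) hx

theorem support_seqFun_subset (j : ℕ) :
    Function.support (seqFun S j₀ w a j) ⊆
      ⋃ i : Σ t : S.I j, SubIdx S j₀ j t, SubQ S j₀ j i.1 i.2 := by
  intro x hx
  by_contra hout
  simp only [Set.mem_iUnion, not_exists] at hout
  exact hx (by simp [seqFun_eq_tsum_sigma, hout])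

end LevelFunction

section Median

variable {M : Type*} [MetricSpace M] [MeasurableSpace M] {μ : Measure M} {S : ChristSystem M μ}
  {j₀ : ℕ} (w : (j : ℕ) → (t : S.I j) → SubIdx S j₀ j t → ℝ≥0∞)
  (a : (j : ℕ) → (t : S.I j) → SubIdx S j₀ j t → ℂ)

theorem mQuant_eq_upperQuantile (q : ℝ≥0∞) {k : ℕ} (α : S.I k) (u : SubIdx S j₀ k α) :
    mQuant S j₀ w a q k α u = upperQuantile μ (SubQ S j₀ k α u) (μ (SubQ S j₀ k α u) / 4)
      (tailLq q (seqFun S j₀ w a) k) := by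
  have hG (x : M) (hx : x ∈ SubQ S j₀ k α u) :
      Gfun S j₀ w a q k α u x = tailLq q (seqFun S j₀ w a) k x := by
    simp [Gfun, tailLq, hx]
  have hset (t : ℝ≥0∞) : {x ∈ SubQ S j₀ k α u | t < Gfun S j₀ w a q k α u x} =
      {x ∈ SubQ S j₀ k α u | t < tailLq q (seqFun S j₀ w a) k x} :=
    Set.ext fun x => and_congr_right fun hx => by rw [hG x hx]
  simp only [mQuant, upperQuantile, hset]

theorem mQuant_le_essSup_mMax (q : ℝ≥0∞) {k : ℕ} {α : S.I k} {u : SubIdx S j₀ k α}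
    (hu : μ (SubQ S j₀ k α u) ≠ 0) :
    mQuant S j₀ w a q k α u ≤ essSup (mMax S j₀ w a q) μ := by
  obtain ⟨x, hx, hle⟩ : ∃ x ∈ SubQ S j₀ k α u, mMax S j₀ w a q x ≤ essSup (mMax S j₀ w a q) μ :=
    ((frequently_ae_mem_iff.2 hu).and_eventually (ENNReal.ae_le_essSup _)).exists
  calc mQuant S j₀ w a q k α u
      = mQuant S j₀ w a q k α u * (SubQ S j₀ k α u).indicator (fun _ => 1) x := by simp [hx]
    _ ≤ mMax S j₀ w a q x := le_iSup_of_le k (le_iSup_of_le α (le_iSup_of_le u le_rfl))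
    _ ≤ essSup (mMax S j₀ w a q) μ := hle

theorem essSup_mMax_le {q b : ℝ≥0∞}
    (h : ∀ (k : ℕ) (α : S.I k) (u : SubIdx S j₀ k α), mQuant S j₀ w a q k α u ≤ b) :
    essSup (mMax S j₀ w a q) μ ≤ b := by
  refine essSup_le_of_ae_le _ <| Filter.Eventually.of_forall fun x =>
    iSup_le fun k => iSup_le fun α => iSup_le fun u => ?_
  have hind : (SubQ S j₀ k α u).indicator (fun _ => (1 : ℝ≥0∞)) x ≤ 1 :=
    Set.indicator_le (fun _ _ => le_rfl) x
  exact (mul_le_of_le_one_right' hind).trans (h k α u)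

/-- The points at which the `ℓ^q` tail from level `j` on is at most the essential supremum `L` of
the maximal median function. By the choice of the median, it fills at least half of each level-`j`
subcube. -/
def goodSet (q : ℝ≥0∞) (j : ℕ) : Set M :=
  {x | tailLq q (seqFun S j₀ w a) j x ≤ essSup (mMax S j₀ w a q) μ}

variable [BorelSpace M]

theorem measurableSet_goodSet (q : ℝ≥0∞) (j : ℕ) : MeasurableSet (goodSet w a q j) :=
  measurableSet_le (measurable_tailLq (measurable_seqFun w a)) measurable_const

theorem measure_subQ_le_two_mul_inter_goodSet
    (hμ : ∀ (j : ℤ) (α : S.I j), 0 < μ (S.Q j α) ∧ μ (S.Q j α) < ⊤)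
    (q : ℝ≥0∞) {j : ℕ} (t : S.I j) (ν : SubIdx S j₀ j t) :
    μ (SubQ S j₀ j t ν) ≤ 2 * μ (SubQ S j₀ j t ν ∩ goodSet w a q j) := by
  have hP : 0 < μ (SubQ S j₀ j t ν) ∧ μ (SubQ S j₀ j t ν) < ⊤ := hμ _ ν.1
  refine measure_le_two_mul_measure_inter hP.2.ne (measurableSet_goodSet w a q j) ?_
  have hL := mQuant_le_essSup_mMax w a q hP.1.ne'
  have hbad : SubQ S j₀ j t ν \ goodSet w a q j ⊆ {x ∈ SubQ S j₀ j t ν |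
      mQuant S j₀ w a q j t ν < tailLq q (seqFun S j₀ w a) j x} :=
    fun x hx => ⟨hx.1, hL.trans_lt (not_le.1 hx.2)⟩
  calc μ (SubQ S j₀ j t ν \ goodSet w a q j)
      ≤ μ {x ∈ SubQ S j₀ j t ν |
          mQuant S j₀ w a q j t ν < tailLq q (seqFun S j₀ w a) j x} := measure_mono hbad
    _ ≤ μ (SubQ S j₀ j t ν) / 4 := by
        rw [mQuant_eq_upperQuantile]
        exact measure_upperQuantile_lt_le
    _ ≤ μ (SubQ S j₀ j t ν) / 2 := by
        gcongr
        norm_num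

theorem lintegral_seqFun_rpow_le_mul_setLIntegral {r : ℝ} (hr : 0 < r) {E : Set M}
    (hE : MeasurableSet E) {N : ℝ≥0∞} {j : ℕ} (hN : ∀ (t : S.I j) (ν : SubIdx S j₀ j t),
      μ (SubQ S j₀ j t ν) ≤ N * μ (SubQ S j₀ j t ν ∩ E))
    {k : ℤ} (hk : k.toNat ≤ j) (α : S.I k) :
    ∫⁻ x in S.Q k α, seqFun S j₀ w a j x ^ r ∂μ ≤
      N * ∫⁻ x in E, seqFun S j₀ w a j x ^ r ∂μ.restrict (S.Q k α) := by
  have := S.countable_sigma_subIdx j₀ j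
  have hsupp : Function.support (fun x => seqFun S j₀ w a j x ^ r) ⊆
      Function.support (seqFun S j₀ w a j) := fun x hx h0 => hx (by simp [h0, hr])
  exact lintegral_le_mul_setLIntegral_of_eq_on_cells
    (P := fun i : Σ t : S.I j, SubIdx S j₀ j t => SubQ S j₀ j i.1 i.2)
    (c := fun i => (w j i.1 i.2 * ‖a j i.1 i.2‖₊) ^ r)
    (fun i => S.measurableSet_subQ i.1 i.2) (S.pairwise_disjoint_subQ j₀ j)
    (hsupp.trans (support_seqFun_subset w a j))
    (fun i x hx => by rw [seqFun_of_mem_subQ w a hx]) hE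
    fun i => S.restrict_subQ_le_mul_restrict_inter hk α (hN i.1 i.2)

theorem lintegral_tailLq_rpow_le
    (hμ : ∀ (j : ℤ) (α : S.I j), 0 < μ (S.Q j α) ∧ μ (S.Q j α) < ⊤)
    {q : ℝ≥0∞} (hq : q ≠ 0) (hq' : q ≠ ⊤) (k : ℤ) (α : S.I k) :
    ∫⁻ x in S.Q k α, tailLq q (seqFun S j₀ w a) k.toNat x ^ q.toReal ∂μ ≤
      2 * (essSup (mMax S j₀ w a q) μ ^ q.toReal * μ (S.Q k α)) := by
  have hr : 0 < q.toReal := ENNReal.toReal_pos hq hq'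
  simp only [tailLq_rpow hq hq']
  rw [← Measure.restrict_apply_univ (S.Q k α)]
  refine lintegral_tsum_le_of_tail_le (fun j => (measurable_seqFun w a _).pow_const _)
    (fun j => measurableSet_goodSet w a q (k.toNat + j))
    (fun j => lintegral_seqFun_rpow_le_mul_setLIntegral w a hr (measurableSet_goodSet w a q _)
      (measure_subQ_le_two_mul_inter_goodSet w a hμ q) (Nat.le_add_right _ _) α)
    fun n x hx => ?_
  simp only [← add_assoc]
  rw [← tailLq_rpow hq hq']
  exact ENNReal.rpow_le_rpow hx hr.le

theorem seqFun_le_essSup_mMax_top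
    (hμ : ∀ (j : ℤ) (α : S.I j), 0 < μ (S.Q j α) ∧ μ (S.Q j α) < ⊤) (j : ℕ) (x : M) :
    seqFun S j₀ w a j x ≤ essSup (mMax S j₀ w a ⊤) μ := by
  by_cases hx : seqFun S j₀ w a j x = 0
  · exact hx ▸ bot_le
  obtain ⟨⟨t, ν⟩, hxν⟩ := Set.mem_iUnion.1 (support_seqFun_subset w a j hx)
  obtain ⟨y, hyν, hy⟩ : (SubQ S j₀ j t ν ∩ goodSet w a ⊤ j).Nonempty := by
    have hpos : 0 < μ (SubQ S j₀ j t ν) := (hμ _ ν.1).1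
    refine nonempty_of_measure_ne_zero (μ := μ) fun h0 => hpos.ne' ?_
    simpa [h0] using measure_subQ_le_two_mul_inter_goodSet w a hμ ⊤ t ν
  rw [seqFun_of_mem_subQ w a hxν, ← seqFun_of_mem_subQ w a hyν]
  exact tailLq_top_le_iff.1 hy j le_rfl

theorem fNorm_le_mul_essSup_mMax
    (hμ : ∀ (j : ℤ) (α : S.I j), 0 < μ (S.Q j α) ∧ μ (S.Q j α) < ⊤) {q : ℝ≥0∞} (hq : q ≠ 0) :
    fNorm S q q (q⁻¹).toReal (seqFun S j₀ w a) ≤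
      2 ^ (q⁻¹).toReal * essSup (mMax S j₀ w a q) μ := by
  refine fNorm_le_iff.2 fun k α => ?_
  rcases eq_or_ne q ⊤ with rfl | hq'
  · simp only [ENNReal.inv_top, ENNReal.toReal_zero, neg_zero, ENNReal.rpow_zero, one_mul, lpOn,
      if_true]
    exact essSup_le_of_ae_le _ <| Filter.Eventually.of_forall fun x =>
      tailLq_top_le_iff.2 fun j _ => seqFun_le_essSup_mMax_top w a hμ j x
  · exact measure_rpow_neg_mul_lpOn_le hq hq' (lintegral_tailLq_rpow_le w a hμ hq hq' k α)

theorem mQuant_le_mul_fNorm {q D : ℝ≥0∞} (hq : q ≠ 0) {k : ℕ} {α : S.I k}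
    {u : SubIdx S j₀ k α} (hα : μ (S.Q k α) ≠ 0) (hα' : μ (S.Q k α) ≠ ⊤)
    (hD : μ (S.Q k α) ≤ D * μ (SubQ S j₀ k α u)) :
    mQuant S j₀ w a q k α u ≤
      (4 * D) ^ (q⁻¹).toReal * fNorm S q q (q⁻¹).toReal (seqFun S j₀ w a) := by
  rw [mQuant_eq_upperQuantile]
  refine upperQuantile_le_of_forall_gt fun t ht => lt_of_not_ge fun hmass => ht.not_ge ?_
  set B := {x ∈ SubQ S j₀ k α u | t < tailLq q (seqFun S j₀ w a) k x}
  have hBQ : B ⊆ S.Q k α := fun x hx => u.2 hx.1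
  have hQB : μ (S.Q k α) ≤ 4 * D * μ B :=
    calc μ (S.Q k α) ≤ D * μ (SubQ S j₀ k α u) := hD
      _ = D * (4 * (μ (SubQ S j₀ k α u) / 4)) := by
          rw [ENNReal.mul_div_cancel (by norm_num) (by norm_num)]
      _ ≤ D * (4 * μ B) := by gcongr
      _ = 4 * D * μ B := by ring
  have : IsFiniteMeasure (μ.restrict (S.Q k α)) := isFiniteMeasure_restrict.2 hα'
  have : NeZero (μ.restrict (S.Q k α)) := ⟨Measure.restrict_eq_zero.not.2 hα⟩
  have hBm : MeasurableSet B := (S.measurableSet_subQ α u).inter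
    (measurableSet_lt measurable_const (measurable_tailLq (measurable_seqFun w a)))
  calc t ≤ (4 * D) ^ (q⁻¹).toReal * (μ (S.Q k α) ^ (-(q⁻¹).toReal) *
        lpOn μ q (S.Q k α) (tailLq q (seqFun S j₀ w a) k)) := by
        rw [lpOn_eq_eLpNorm hq, ← Measure.restrict_apply_univ (S.Q k α)]
        refine le_mul_eLpNorm_of_forall_mem_le hq hBm ?_ fun x hx => hx.2.le
        rwa [Measure.restrict_apply_univ, Measure.restrict_eq_self _ hBQ]
    _ ≤ (4 * D) ^ (q⁻¹).toReal * fNorm S q q (q⁻¹).toReal (seqFun S j₀ w a) := by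
        gcongr
        exact fNorm_le_iff.1 le_rfl (k : ℤ) α

end Median

end ChristSystem

open scoped NNReal in
theorem stmt_17_general {M : Type*} [MetricSpace M] [MeasurableSpace M] [BorelSpace M]
    {μ : Measure M} (S : ChristSystem M μ)
    (hμ : ∀ (j : ℤ) (α : S.I j), 0 < μ (S.Q j α) ∧ μ (S.Q j α) < ⊤) {j₀ : ℕ} {D : ℝ≥0}
    (hD : ∀ (k : ℕ) (α : S.I k) (u : SubIdx S j₀ k α), μ (S.Q k α) ≤ D * μ (SubQ S j₀ k α u))
    {q : ℝ≥0∞} (hq : 0 < q) :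
    ∃ C : ℝ, 1 ≤ C ∧
      ∀ (w : (j : ℕ) → (t : S.I j) → SubIdx S j₀ j t → ℝ≥0∞)
        (a : (j : ℕ) → (t : S.I j) → SubIdx S j₀ j t → ℂ),
        (fNorm S q q (q⁻¹).toReal (seqFun S j₀ w a) ≤
            ENNReal.ofReal C * essSup (mMax S j₀ w a q) μ) ∧
        (essSup (mMax S j₀ w a q) μ ≤
            ENNReal.ofReal C * fNorm S q q (q⁻¹).toReal (seqFun S j₀ w a)) := by
  have hτ : 0 ≤ (q⁻¹).toReal := ENNReal.toReal_nonneg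
  have hbase : 1 ≤ 2 + 4 * D := one_le_two.trans le_self_add
  refine ⟨((2 + 4 * D) ^ (q⁻¹).toReal : ℝ≥0), mod_cast NNReal.one_le_rpow hbase hτ, fun w a => ?_⟩
  rw [ENNReal.ofReal_coe_nnreal, ENNReal.coe_rpow_of_nonneg _ hτ]
  push_cast
  refine ⟨(ChristSystem.fNorm_le_mul_essSup_mMax w a hμ hq.ne').trans ?_,
    ChristSystem.essSup_mMax_le w a fun k α u =>
      (ChristSystem.mQuant_le_mul_fNorm w a hq.ne' (hμ k α).1.ne' (hμ k α).2.ne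
        (hD k α u)).trans ?_⟩
  · gcongr
    exact le_self_add
  · gcongr
    exact le_add_self

theorem stmt_17 {M : Type*} [MetricSpace M] [MeasurableSpace M] [BorelSpace M]
    (μ : Measure M)
    (hball : ∀ (x : M) (r : ℝ), 0 < r → 0 < μ (ball x r) ∧ μ (ball x r) < ⊤)
    (K d : ℝ) (hK : 1 < K) (hd : d = Real.logb 2 K)
    (hdoub : ∀ (x : M) (r lam : ℝ), 0 < r → 1 ≤ lam →
      μ (ball x (lam * r)) ≤ ENNReal.ofReal (K * lam ^ d) * μ (ball x r))
    (S : ChristSystem M μ) (j₀ : ℕ)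
    (hfin : ∀ (j : ℕ) (t : S.I j), Finite (SubIdx S j₀ j t))
    (s : ℝ) (q : ℝ≥0∞) (hq : 0 < q) :
    ∃ C : ℝ, 1 ≤ C ∧
      ∀ a : (j : ℕ) → (t : S.I j) → SubIdx S j₀ j t → ℂ,
        (fNorm S q q (q⁻¹).toReal (seqFun S j₀ (tildeWeight S j₀ d s) a) ≤
            ENNReal.ofReal C * essSup (mMax S j₀ (tildeWeight S j₀ d s) a q) μ) ∧
        (essSup (mMax S j₀ (tildeWeight S j₀ d s) a q) μ ≤
            ENNReal.ofReal C * fNorm S q q (q⁻¹).toReal (seqFun S j₀ (tildeWeight S j₀ d s) a)) ∧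
        (fNorm S q q (q⁻¹).toReal (seqFun S j₀ (deltaWeight S j₀ s) a) ≤
            ENNReal.ofReal C * essSup (mMax S j₀ (deltaWeight S j₀ s) a q) μ) ∧
        (essSup (mMax S j₀ (deltaWeight S j₀ s) a q) μ ≤
            ENNReal.ofReal C * fNorm S q q (q⁻¹).toReal (seqFun S j₀ (deltaWeight S j₀ s) a)) := by
  obtain ⟨C, hC, h⟩ := stmt_17_general S (S.measure_Q_pos_lt_top hball)
    (fun _ => S.measure_Q_le_mul_measure_subQ (j₀ := j₀) hdoub) hq
  exact ⟨C, hC, fun a => ⟨(h _ a).1, (h _ a).2, (h _ a).1, (h _ a).2⟩⟩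
end
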